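/- arXiv:2605.22173 — 2 statements merged into one kernel-verified Lean document; each statement's English description precedes it below -/
import Mathlib

section
/- Let q be a prime power, F a finite field with q elements, d ≥ 3 an integer, S ⊆ {1,…,d−1} with |S| ≥ 2, let τ be a face of the projected flags complex B(d,S,q) with |S| − |τ| ≥ 2, and let i ≠ j be two elements of S that are not dimensions of members of τ. Sample a uniformly random maximal face T of B(d,S,q) with τ ⊆ T, let U_i and U_j be the elements of T of dimensions i and j respectively, and let π₀ pick U_i or U_j with probability 1/2 each. Then every f from {W : dim(W) ∈ {i,j} and τ ∪ {W} is a chain} to ℝ with E_{π₀}[f] = 0 satisfies E_T[f(U_i)·f(U_j)] ≤ (1/√q)·E_{π₀}[f²]. In other words, B(d,S,q) is a (1/√q)-product. -/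
open Finset
open scoped Classical

noncomputable instance (F : Type) [Field F] [Fintype F] (n : ℕ) :
    Fintype (Submodule F (Fin n → F)) :=
  Fintype.ofInjective (fun W => (W : Set (Fin n → F)))
    fun _ _ h => SetLike.coe_injective h

/-- A face of the projected flags complex `B(n,S,q)`: a finite chain of subspaces of `F^n`
whose dimensions all lie in `S`. -/
def IsFlagFace (F : Type) [Field F] [Fintype F] (n : ℕ) (S : Finset ℕ)
    (s : Finset (Submodule F (Fin n → F))) : Prop :=
  IsChain (· ≤ ·) (s : Set (Submodule F (Fin n → F))) ∧
    ∀ W ∈ s, Module.finrank F W ∈ S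

/-- A maximal face of `B(n,S,q)`: a chain containing one subspace of each dimension in `S`. -/
def IsMaxFlagFace (F : Type) [Field F] [Fintype F] (n : ℕ) (S : Finset ℕ)
    (T : Finset (Submodule F (Fin n → F))) : Prop :=
  IsFlagFace F n S T ∧ ∀ i ∈ S, ∃ W ∈ T, Module.finrank F W = i

/-- The maximal faces of `B(n,S,q)` containing a given face `τ`. -/
noncomputable def maxFacesAbove (F : Type) [Field F] [Fintype F] (n : ℕ) (S : Finset ℕ)
    (τ : Finset (Submodule F (Fin n → F))) : Finset (Finset (Submodule F (Fin n → F))) :=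
  Finset.univ.filter fun T => IsMaxFlagFace F n S T ∧ τ ⊆ T

/-- `E_{π₀}[f]` where one samples a uniform maximal face `T ⊇ τ` and `π₀` picks the element
of `T` of dimension `i` or the one of dimension `j`, with probability `1/2` each. -/
noncomputable def twoColorExp (F : Type) [Field F] [Fintype F] (n : ℕ) (S : Finset ℕ)
    (τ : Finset (Submodule F (Fin n → F))) (i j : ℕ)
    (f : Submodule F (Fin n → F) → ℝ) : ℝ :=
  (∑ T ∈ maxFacesAbove F n S τ,
      ((∑ W ∈ T.filter (fun W : Submodule F (Fin n → F) => Module.finrank F W = i), f W) +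
        (∑ W ∈ T.filter (fun W : Submodule F (Fin n → F) => Module.finrank F W = j), f W)) / 2) /
    ((maxFacesAbove F n S τ).card : ℝ)

/-- `E_T[f(U_i)·g(U_j)]` where `T` is a uniform maximal face containing `τ` and `U_i`, `U_j`
are its elements of dimensions `i` and `j`. -/
noncomputable def twoColorPairExp (F : Type) [Field F] [Fintype F] (n : ℕ) (S : Finset ℕ)
    (τ : Finset (Submodule F (Fin n → F))) (i j : ℕ)
    (f g : Submodule F (Fin n → F) → ℝ) : ℝ :=
  (∑ T ∈ maxFacesAbove F n S τ,
      (∑ W ∈ T.filter (fun W : Submodule F (Fin n → F) => Module.finrank F W = i), f W) *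
        (∑ W ∈ T.filter (fun W : Submodule F (Fin n → F) => Module.finrank F W = j), g W)) /
    ((maxFacesAbove F n S τ).card : ℝ)


namespace FlagExp
variable {F : Type} [Field F] [Fintype F] {d : ℕ}

/-- Subspaces of dimension `k` in the interval `[A,B]`. -/
noncomputable def gr (A B : Submodule F (Fin d → F)) (k : ℕ) :
    Finset (Submodule F (Fin d → F)) :=
  Finset.univ.filter fun W => A ≤ W ∧ W ≤ B ∧ Module.finrank F W = k

lemma mem_gr {A B W : Submodule F (Fin d → F)} {k : ℕ} :
    W ∈ gr A B k ↔ A ≤ W ∧ W ≤ B ∧ Module.finrank F W = k := by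
  simp [gr]

lemma card_gr (A B : Submodule F (Fin d → F)) (hAB : A ≤ B) (k : ℕ) :
    (gr A B (Module.finrank F A + k)).card =
      Nat.card {W : Submodule F (Fin (Module.finrank F B - Module.finrank F A) → F) //
        Module.finrank F W = k} := by
  set A' : Submodule F B := A.comap B.subtype with hA'
  have hfA' : Module.finrank F A' = Module.finrank F A :=
    (Submodule.comapSubtypeEquivOfLe hAB).finrank_eq
  have hq : Module.finrank F (B ⧸ A') =
      Module.finrank F (Fin (Module.finrank F B - Module.finrank F A) → F) := by
    have := Submodule.finrank_quotient_add_finrank A'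
    rw [Module.finrank_fin_fun]
    omega
  let e0 := LinearEquiv.ofFinrankEq _ _ hq
  let e : B →ₗ[F] (Fin (Module.finrank F B - Module.finrank F A) → F) :=
    e0.toLinearMap ∘ₗ A'.mkQ
  have hsurj : Function.Surjective e := by
    simpa [e] using A'.mkQ_surjective
  have hker : LinearMap.ker e = A' := by
    simp [e, LinearMap.ker_comp]
  have hfr : ∀ W', Module.finrank F (Submodule.map B.subtype (Submodule.comap e W')) =
      Module.finrank F A + Module.finrank F W' := by
    intro W'
    rw [Submodule.finrank_map_subtype_eq]
    have h1 := LinearMap.finrank_range_add_finrank_ker (V := Submodule.comap e W')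
      (e.domRestrict (Submodule.comap e W'))
    have h2 : LinearMap.range (e.domRestrict (Submodule.comap e W')) = W' := by
      rw [LinearMap.range_domRestrict, Submodule.map_comap_eq_of_surjective hsurj]
    have h3 : LinearMap.ker (e.domRestrict (Submodule.comap e W')) =
        A'.comap (Submodule.comap e W').subtype := by
      rw [LinearMap.ker_domRestrict, hker]
    have h4 : A' ≤ Submodule.comap e W' := by
      rw [← hker]; exact LinearMap.ker_le_comap e
    have h5 := (Submodule.comapSubtypeEquivOfLe h4).finrank_eq
    rw [h2, h3, h5, hfA'] at h1
    omega
  rw [← Nat.card_eq_finsetCard]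
  symm
  refine Nat.card_congr (Equiv.ofBijective (fun W' => ⟨Submodule.map B.subtype (Submodule.comap e W'.1), ?_⟩) ⟨?_, ?_⟩)
  · rw [mem_gr, hfr, W'.2]
    refine ⟨?_, Submodule.map_subtype_le _ _, rfl⟩
    intro x hx
    refine ⟨⟨x, hAB hx⟩, ?_, rfl⟩
    have : (⟨x, hAB hx⟩ : B) ∈ LinearMap.ker e := by rw [hker]; exact hx
    exact LinearMap.ker_le_comap e this
  · intro W1 W2 h
    have h := congrArg Subtype.val h
    exact Subtype.ext (Submodule.comap_injective_of_surjective hsurj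
      (Submodule.map_injective_of_injective B.injective_subtype h))
  · rintro ⟨W, hW⟩
    obtain ⟨h1, h2, h3⟩ := mem_gr.1 hW
    have key : Submodule.map B.subtype (Submodule.comap e (Submodule.map e (Submodule.comap B.subtype W))) = W := by
      rw [Submodule.comap_map_eq, hker, sup_eq_left.2 (Submodule.comap_mono h1), Submodule.map_comap_subtype, inf_eq_right.2 h2]
    refine ⟨⟨Submodule.map e (Submodule.comap B.subtype W), ?_⟩, Subtype.ext key⟩
    have := hfr (Submodule.map e (Submodule.comap B.subtype W))
    rw [key] at this
    omega

/-- The number of points of projective space. -/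
def pt (q m : ℕ) : ℕ := ∑ i ∈ Finset.range m, q ^ i

lemma pt_succ (q m : ℕ) : pt q (m+1) = 1 + q * pt q m := by
  simp only [pt]
  rw [Finset.sum_range_succ', Finset.mul_sum]
  simp [pow_succ', add_comm]

lemma card_points (V : Type) [AddCommGroup V] [Module F V] :
    Nat.card {W : Submodule F V // Module.finrank F W = 1} =
      pt (Fintype.card F) (Module.finrank F V) := by
  rw [← Nat.card_congr (Projectivization.equivSubmodule F V),
    Projectivization.card_of_finrank F V rfl, Nat.card_eq_fintype_card, pt]

lemma card_hyper (n : ℕ) :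
    Nat.card {W : Submodule F (Fin (n+1) → F) // Module.finrank F W = n} =
      pt (Fintype.card F) (n+1) := by
  have h := card_points (F := F) (Module.Dual F (Fin (n+1) → F))
  rw [Subspace.dual_finrank_eq, Module.finrank_fin_fun] at h
  rw [← h]
  refine Nat.card_congr (Equiv.subtypeEquiv
    ((Subspace.orderIsoFiniteDimensional (K := F) (V := Fin (n+1) → F)).toEquiv.trans OrderDual.ofDual) ?_)
  intro W
  have := Subspace.finrank_add_finrank_dualAnnihilator_eq W
  rw [Module.finrank_fin_fun] at this
  change _ ↔ Module.finrank F (Submodule.dualAnnihilator W) = 1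
  omega

lemma card_gr_up (A B : Submodule F (Fin d → F)) (hAB : A ≤ B) (k : ℕ)
    (hk : Module.finrank F A = k) :
    (gr A B (k + 1)).card = pt (Fintype.card F) (Module.finrank F B - k) := by
  subst hk
  rw [card_gr A B hAB, card_points, Module.finrank_fin_fun]

lemma card_gr_down (A B : Submodule F (Fin d → F)) (hAB : A ≤ B) (k : ℕ)
    (hk : Module.finrank F B = k + 1) (hA : Module.finrank F A ≤ k) :
    (gr A B k).card = pt (Fintype.card F) (k + 1 - Module.finrank F A) := by
  obtain ⟨m, rfl⟩ := Nat.exists_eq_add_of_le hA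
  have e : Module.finrank F B - Module.finrank F A = m + 1 := by omega
  rw [card_gr A B hAB, e, card_hyper]
  congr 1
  omega

lemma card_gr_congr {A B A' B' : Submodule F (Fin d → F)} (hAB : A ≤ B) (hAB' : A' ≤ B')
    (hA : Module.finrank F A = Module.finrank F A')
    (hB : Module.finrank F B = Module.finrank F B') (k : ℕ) :
    (gr A B k).card = (gr A' B' k).card := by
  by_cases hk : Module.finrank F A ≤ k
  · obtain ⟨m, rfl⟩ := Nat.exists_eq_add_of_le hk
    rw [card_gr A B hAB, hA, hB, card_gr A' B' hAB']
  · have : ∀ (A B : Submodule F (Fin d → F)), ¬ Module.finrank F A ≤ k → gr A B k = ∅ := by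
      intro A B h
      rw [Finset.eq_empty_iff_forall_notMem]
      intro W hW
      obtain ⟨h1, h2, h3⟩ := mem_gr.1 hW
      exact h (h3 ▸ Submodule.finrank_mono h1)
    rw [this A B hk, this A' B' (hA ▸ hk)]

section Abstract
variable {α β : Type*}

lemma transpose_bound (X : Finset α) (Y : Finset β) (M : α → β → ℝ) (C r : ℝ) (hC : 0 ≤ C)
    (hrow : ∀ x ∈ X, ∑ y ∈ Y, M x y = r)
    (hb : ∀ g : β → ℝ, ∑ y ∈ Y, g y = 0 →
      ∑ x ∈ X, (∑ y ∈ Y, M x y * g y) ^ 2 ≤ C * ∑ y ∈ Y, g y ^ 2)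
    (f : α → ℝ) (hf : ∑ x ∈ X, f x = 0) :
    ∑ y ∈ Y, (∑ x ∈ X, M x y * f x) ^ 2 ≤ C * ∑ x ∈ X, f x ^ 2 := by
  set g : β → ℝ := fun y => ∑ x ∈ X, M x y * f x with hg
  have hg0 : ∑ y ∈ Y, g y = 0 := by
    simp only [hg]
    rw [Finset.sum_comm]
    have : ∀ x ∈ X, ∑ y ∈ Y, M x y * f x = r * f x := by
      intro x hx
      rw [← Finset.sum_mul, hrow x hx]
    rw [Finset.sum_congr rfl this, ← Finset.mul_sum, hf, mul_zero]
  have h1 := hb g hg0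
  have h2 : ∑ y ∈ Y, g y ^ 2 = ∑ x ∈ X, f x * ∑ y ∈ Y, M x y * g y := by
    simp only [Finset.mul_sum]
    rw [Finset.sum_comm]
    refine Finset.sum_congr rfl fun y _ => ?_
    rw [sq]
    nth_rewrite 1 [hg]
    simp only [Finset.sum_mul]
    refine Finset.sum_congr rfl fun x _ => by ring
  have h3 := Finset.sum_mul_sq_le_sq_mul_sq X f (fun x => ∑ y ∈ Y, M x y * g y)
  rw [← h2] at h3
  have hG : 0 ≤ ∑ y ∈ Y, g y ^ 2 := Finset.sum_nonneg fun _ _ => sq_nonneg _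
  have hFs : 0 ≤ ∑ x ∈ X, f x ^ 2 := Finset.sum_nonneg fun _ _ => sq_nonneg _
  rcases hG.eq_or_lt with h0 | hpos
  · -- then `f` is in the kernel
    change ∑ y ∈ Y, g y ^ 2 ≤ _
    rw [← h0]
    positivity
  · change ∑ y ∈ Y, g y ^ 2 ≤ _
    have h4 : (∑ y ∈ Y, g y ^ 2) * ∑ y ∈ Y, g y ^ 2 ≤ (C * ∑ x ∈ X, f x ^ 2) * ∑ y ∈ Y, g y ^ 2 := by
      nlinarith [mul_le_mul_of_nonneg_left h1 hFs]
    exact le_of_mul_le_mul_right h4 hpos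

lemma schur_bound (X : Finset α) (Y : Finset β) (M : α → β → ℝ) (r c : ℝ)
    (hM : ∀ x ∈ X, ∀ y ∈ Y, 0 ≤ M x y)
    (hrow : ∀ x ∈ X, ∑ y ∈ Y, M x y = r) (hcol : ∀ y ∈ Y, ∑ x ∈ X, M x y = c)
    (h : α → ℝ) :
    ∑ y ∈ Y, (∑ x ∈ X, M x y * h x) ^ 2 ≤ r * c * ∑ x ∈ X, h x ^ 2 := by
  have h1 : ∀ y ∈ Y, (∑ x ∈ X, M x y * h x) ^ 2 ≤ c * ∑ x ∈ X, M x y * h x ^ 2 := by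
    intro y hy
    rw [← hcol y hy]
    refine Finset.sum_sq_le_sum_mul_sum_of_sq_le_mul X (fun x hx => hM x hx y hy)
      (fun x hx => mul_nonneg (hM x hx y hy) (sq_nonneg _)) (fun x hx => le_of_eq (by ring))
  refine (Finset.sum_le_sum h1).trans (le_of_eq ?_)
  rw [← Finset.mul_sum, Finset.sum_comm]
  have : ∀ x ∈ X, ∑ y ∈ Y, M x y * h x ^ 2 = r * h x ^ 2 := by
    intro x hx
    rw [← Finset.sum_mul, hrow x hx]
  rw [Finset.sum_congr rfl this, ← Finset.mul_sum]
  ring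

lemma final_bound (X : Finset α) (Y : Finset β) (M : α → β → ℝ) (q r c : ℝ) (hq : 0 < q)
    (hr : 0 ≤ r) (hc : 0 ≤ c)
    (hM : ∀ x ∈ X, ∀ y ∈ Y, 0 ≤ M x y)
    (hrow : ∀ x ∈ X, ∑ y ∈ Y, M x y = r) (hcol : ∀ y ∈ Y, ∑ x ∈ X, M x y = c)
    (hb : ∀ f : α → ℝ, ∑ x ∈ X, f x = 0 →
      q * ∑ y ∈ Y, (∑ x ∈ X, M x y * f x) ^ 2 ≤ r * c * ∑ x ∈ X, f x ^ 2)
    (f : α → ℝ) (g : β → ℝ)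
    (hfg : ∑ x ∈ X, ∑ y ∈ Y, M x y * (f x + g y) = 0) :
    ∑ x ∈ X, ∑ y ∈ Y, M x y * (f x * g y) ≤
      1 / Real.sqrt q * (∑ x ∈ X, ∑ y ∈ Y, M x y * (f x ^ 2 + g y ^ 2) / 2) := by
  -- row and column sum formulas
  have hR : ∀ φ : α → ℝ, ∑ x ∈ X, ∑ y ∈ Y, M x y * φ x = r * ∑ x ∈ X, φ x := by
    intro φ
    rw [Finset.mul_sum]
    refine Finset.sum_congr rfl fun x hx => ?_
    rw [← Finset.sum_mul, hrow x hx]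
  have hCc : ∀ φ : β → ℝ, ∑ x ∈ X, ∑ y ∈ Y, M x y * φ y = c * ∑ y ∈ Y, φ y := by
    intro φ
    rw [Finset.sum_comm, Finset.mul_sum]
    refine Finset.sum_congr rfl fun y hy => ?_
    rw [← Finset.sum_mul, hcol y hy]
  have hmass : r * X.card = c * Y.card := by
    have h1 := hR (fun _ => 1)
    have h2 := hCc (fun _ => 1)
    simp only [Finset.sum_const, nsmul_eq_mul, mul_one] at h1 h2
    rw [← h1, ← h2]
  have hmean : r * ∑ x ∈ X, f x + c * ∑ y ∈ Y, g y = 0 := by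
    rw [← hR, ← hCc, ← Finset.sum_add_distrib, ← hfg]
    refine Finset.sum_congr rfl fun x hx => ?_
    rw [← Finset.sum_add_distrib]
    refine Finset.sum_congr rfl fun y hy => by ring
  have hrhs : ∑ x ∈ X, ∑ y ∈ Y, M x y * (f x ^ 2 + g y ^ 2) / 2 =
      (r * ∑ x ∈ X, f x ^ 2 + c * ∑ y ∈ Y, g y ^ 2) / 2 := by
    rw [← hR, ← hCc, ← Finset.sum_add_distrib, Finset.sum_div]
    refine Finset.sum_congr rfl fun x hx => ?_
    rw [← Finset.sum_add_distrib, Finset.sum_div]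
    refine Finset.sum_congr rfl fun y hy => by ring
  rw [hrhs]
  have hsq : 0 < Real.sqrt q := Real.sqrt_pos.2 hq
  rcases (mul_nonneg hr (Nat.cast_nonneg X.card) : (0:ℝ) ≤ r * X.card).eq_or_lt with h0 | hpos
  · -- all weights vanish
    have hz : ∑ x ∈ X, ∑ y ∈ Y, M x y = 0 := by
      have h1 := hR (fun _ => 1)
      simp only [Finset.sum_const, nsmul_eq_mul, mul_one] at h1
      rw [h1, ← h0]
    have hz1 := (Finset.sum_eq_zero_iff_of_nonneg
      (fun x hx => Finset.sum_nonneg (fun y hy => hM x hx y hy))).1 hz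
    have hl : ∑ x ∈ X, ∑ y ∈ Y, M x y * (f x * g y) = 0 := by
      refine Finset.sum_eq_zero fun x hx => Finset.sum_eq_zero fun y hy => ?_
      rw [(Finset.sum_eq_zero_iff_of_nonneg (fun y hy => hM x hx y hy)).1 (hz1 x hx) y hy, zero_mul]
    rw [hl]
    have : 0 ≤ ∑ x ∈ X, f x ^ 2 := Finset.sum_nonneg fun _ _ => sq_nonneg _
    have : 0 ≤ ∑ x ∈ Y, g x ^ 2 := Finset.sum_nonneg fun _ _ => sq_nonneg _
    positivity
  · have hpos' : 0 < c * Y.card := hmass ▸ hpos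
    have hX : (0:ℝ) < X.card := by
      rcases (Nat.cast_nonneg X.card : (0:ℝ) ≤ _).eq_or_lt with h | h
      · rw [← h] at hpos; simp at hpos
      · exact h
    have hY : (0:ℝ) < Y.card := by
      rcases (Nat.cast_nonneg Y.card : (0:ℝ) ≤ _).eq_or_lt with h | h
      · rw [← h] at hpos'; simp at hpos'
      · exact h
    set a : ℝ := (∑ x ∈ X, f x) / X.card with ha
    have hfa : ∑ x ∈ X, f x = a * X.card := by rw [ha]; field_simp
    have hgb : ∑ y ∈ Y, g y = -a * Y.card := by
      have h1 : c * (∑ y ∈ Y, g y + a * Y.card) = 0 := by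
        rw [hfa] at hmean
        linear_combination hmean - a * hmass
      have hc0 : c ≠ 0 := by rintro rfl; simp at hpos'
      have := (mul_eq_zero.1 h1).resolve_left hc0
      linarith
    have hf0 : ∑ x ∈ X, (f x - a) = 0 := by
      rw [Finset.sum_sub_distrib, hfa, Finset.sum_const, nsmul_eq_mul]; ring
    have hg0 : ∑ y ∈ Y, (g y + a) = 0 := by
      rw [Finset.sum_add_distrib, hgb, Finset.sum_const, nsmul_eq_mul]; ring
    have hF2 : ∑ x ∈ X, (f x - a) ^ 2 ≤ ∑ x ∈ X, f x ^ 2 := by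
      have : ∑ x ∈ X, (f x - a) ^ 2 = ∑ x ∈ X, f x ^ 2 - 2 * a * ∑ x ∈ X, f x + X.card * a ^ 2 := by
        rw [Finset.mul_sum, ← Finset.sum_sub_distrib, ← nsmul_eq_mul, ← Finset.sum_const,
          ← Finset.sum_add_distrib]
        exact Finset.sum_congr rfl fun x _ => by ring
      rw [this, hfa]
      nlinarith [mul_nonneg hX.le (sq_nonneg a)]
    have hG2 : ∑ y ∈ Y, (g y + a) ^ 2 ≤ ∑ y ∈ Y, g y ^ 2 := by
      have : ∑ y ∈ Y, (g y + a) ^ 2 = ∑ y ∈ Y, g y ^ 2 + 2 * a * ∑ y ∈ Y, g y + Y.card * a ^ 2 := by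
        rw [Finset.mul_sum, ← Finset.sum_add_distrib, ← nsmul_eq_mul, ← Finset.sum_const,
          ← Finset.sum_add_distrib]
        exact Finset.sum_congr rfl fun x _ => by ring
      rw [this, hgb]
      nlinarith [mul_nonneg hY.le (sq_nonneg a)]
    have hdec : ∑ x ∈ X, ∑ y ∈ Y, M x y * (f x * g y) =
        ∑ x ∈ X, ∑ y ∈ Y, M x y * ((f x - a) * (g y + a)) - a ^ 2 * (r * X.card) := by
      have e1 : ∑ x ∈ X, ∑ y ∈ Y, M x y * (f x * g y) =
        ∑ x ∈ X, ∑ y ∈ Y, M x y * ((f x - a) * (g y + a)) +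
          (∑ x ∈ X, ∑ y ∈ Y, M x y * (a * (g y + a))
          - ∑ x ∈ X, ∑ y ∈ Y, M x y * (a * (f x - a)) - ∑ x ∈ X, ∑ y ∈ Y, M x y * (a ^ 2)) := by
        simp only [← Finset.sum_sub_distrib, ← Finset.sum_add_distrib]
        exact Finset.sum_congr rfl fun x _ => Finset.sum_congr rfl fun y _ => by ring
      rw [e1, hCc (fun y => a * (g y + a)), hR (fun x => a * (f x - a)), hR (fun _ => a ^ 2),
        ← Finset.mul_sum, ← Finset.mul_sum, hf0, hg0]
      simp only [Finset.sum_const, nsmul_eq_mul]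
      ring
    set P := ∑ x ∈ X, ∑ y ∈ Y, M x y * ((f x - a) * (g y + a)) with hP
    have hPsq : q * P ^ 2 ≤ (r * ∑ x ∈ X, (f x - a) ^ 2) * (c * ∑ y ∈ Y, (g y + a) ^ 2) := by
      have e : P = ∑ y ∈ Y, (∑ x ∈ X, M x y * (f x - a)) * (g y + a) := by
        rw [hP, Finset.sum_comm]
        refine Finset.sum_congr rfl fun y _ => ?_
        rw [Finset.sum_mul]
        exact Finset.sum_congr rfl fun x _ => by ring
      have h1 := Finset.sum_mul_sq_le_sq_mul_sq Y (fun y => ∑ x ∈ X, M x y * (f x - a))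
        (fun y => g y + a)
      rw [← e] at h1
      have h2 := hb (fun x => f x - a) hf0
      have h3 : 0 ≤ ∑ y ∈ Y, (g y + a) ^ 2 := Finset.sum_nonneg fun _ _ => sq_nonneg _
      have h4 := mul_le_mul_of_nonneg_right h2 h3
      have h5 := mul_le_mul_of_nonneg_left h1 hq.le
      nlinarith
    have hu : 0 ≤ r * ∑ x ∈ X, (f x - a) ^ 2 :=
      mul_nonneg hr (Finset.sum_nonneg fun _ _ => sq_nonneg _)
    have hv : 0 ≤ c * ∑ y ∈ Y, (g y + a) ^ 2 :=
      mul_nonneg hc (Finset.sum_nonneg fun _ _ => sq_nonneg _)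
    have hu2 : r * ∑ x ∈ X, (f x - a) ^ 2 ≤ r * ∑ x ∈ X, f x ^ 2 :=
      mul_le_mul_of_nonneg_left hF2 hr
    have hv2 : c * ∑ y ∈ Y, (g y + a) ^ 2 ≤ c * ∑ y ∈ Y, g y ^ 2 :=
      mul_le_mul_of_nonneg_left hG2 hc
    have hfin : Real.sqrt q * P ≤ (r * ∑ x ∈ X, f x ^ 2 + c * ∑ y ∈ Y, g y ^ 2) / 2 := by
      refine le_trans (abs_le_of_sq_le_sq' (b := (r * ∑ x ∈ X, (f x - a) ^ 2 + c * ∑ y ∈ Y, (g y + a) ^ 2) / 2) ?_ (by linarith)).2 (by linarith)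
      rw [mul_pow, Real.sq_sqrt hq.le]
      nlinarith [sq_nonneg (r * ∑ x ∈ X, (f x - a) ^ 2 - c * ∑ y ∈ Y, (g y + a) ^ 2)]
    rw [hdec, one_div, inv_mul_eq_div, le_div_iff₀ hsq]
    have : 0 ≤ a ^ 2 * (r * X.card) * Real.sqrt q :=
      mul_nonneg (mul_nonneg (sq_nonneg a) hpos.le) hsq.le
    nlinarith

end Abstract

/-- Inclusion kernel. -/
noncomputable def ic (U W : Submodule F (Fin d → F)) : ℝ := if U ≤ W then 1 else 0

lemma sum_ic_right {A B U : Submodule F (Fin d → F)} (hA : A ≤ U) (k : ℕ) :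
    ∑ W ∈ gr A B k, ic U W = (gr U B k).card := by
  simp only [ic, Finset.sum_boole]
  congr 2
  ext W
  simp only [Finset.mem_filter, mem_gr]
  constructor
  · rintro ⟨⟨h1, h2, h3⟩, h4⟩; exact ⟨h4, h2, h3⟩
  · rintro ⟨h1, h2, h3⟩; exact ⟨⟨hA.trans h1, h2, h3⟩, h1⟩

lemma sum_ic_left {A B W : Submodule F (Fin d → F)} (hB : W ≤ B) (k : ℕ) :
    ∑ U ∈ gr A B k, ic U W = (gr A W k).card := by
  simp only [ic, Finset.sum_boole]
  congr 2
  ext U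
  simp only [Finset.mem_filter, mem_gr]
  constructor
  · rintro ⟨⟨h1, h2, h3⟩, h4⟩; exact ⟨h1, h4, h3⟩
  · rintro ⟨h1, h2, h3⟩; exact ⟨⟨h1, h2.trans hB, h3⟩, h2⟩

lemma sum_ic_common_up {A B U U' : Submodule F (Fin d → F)} (hA : A ≤ U) (k : ℕ) :
    ∑ W ∈ gr A B k, ic U W * ic U' W = (gr (U ⊔ U') B k).card := by
  rw [← sum_ic_right (hA.trans le_sup_left)]
  refine Finset.sum_congr rfl fun W _ => ?_
  simp only [ic, sup_le_iff]
  split_ifs <;> simp_all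

lemma sum_ic_common_down {A B U U' : Submodule F (Fin d → F)} (hB : U ≤ B) (k : ℕ) :
    ∑ Z ∈ gr A B k, ic Z U * ic Z U' = (gr A (U ⊓ U') k).card := by
  rw [← sum_ic_left (inf_le_left.trans hB)]
  refine Finset.sum_congr rfl fun W _ => ?_
  simp only [ic, le_inf_iff]
  split_ifs <;> simp_all

lemma card_gr_of_finrank_left {A B : Submodule F (Fin d → F)} (hAB : A ≤ B) {k : ℕ}
    (hk : Module.finrank F A = k) : gr A B k = {A} := by
  ext W
  simp only [mem_gr, Finset.mem_singleton]
  constructor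
  · rintro ⟨h1, h2, h3⟩
    exact (Submodule.eq_of_le_of_finrank_eq h1 (hk.trans h3.symm)).symm
  · rintro rfl; exact ⟨le_rfl, hAB, hk⟩

lemma card_gr_of_finrank_right {A B : Submodule F (Fin d → F)} (hAB : A ≤ B) {k : ℕ}
    (hk : Module.finrank F B = k) : gr A B k = {B} := by
  ext W
  simp only [mem_gr, Finset.mem_singleton]
  constructor
  · rintro ⟨h1, h2, h3⟩
    exact Submodule.eq_of_le_of_finrank_eq h2 (h3.trans hk.symm)
  · rintro rfl; exact ⟨hAB, le_rfl, hk⟩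

lemma gr_empty_left {A B : Submodule F (Fin d → F)} {k : ℕ}
    (hk : k < Module.finrank F A) : gr A B k = ∅ := by
  rw [Finset.eq_empty_iff_forall_notMem]
  intro W hW
  obtain ⟨h1, h2, h3⟩ := mem_gr.1 hW
  have := Submodule.finrank_mono h1
  omega

lemma gr_empty_right {A B : Submodule F (Fin d → F)} {k : ℕ}
    (hk : Module.finrank F B < k) : gr A B k = ∅ := by
  rw [Finset.eq_empty_iff_forall_notMem]
  intro W hW
  obtain ⟨h1, h2, h3⟩ := mem_gr.1 hW
  have := Submodule.finrank_mono h2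
  omega

lemma pair_count {A B U U' : Submodule F (Fin d → F)} {k : ℕ} (hkA : Module.finrank F A ≤ k)
    (hU : U ∈ gr A B (k+1)) (hU' : U' ∈ gr A B (k+1)) :
    ((gr (U ⊔ U') B (k+2)).card : ℝ) = (gr A (U ⊓ U') k).card +
      if U = U' then ((pt (Fintype.card F) (Module.finrank F B - (k+1)) : ℝ)
        - pt (Fintype.card F) (k + 1 - Module.finrank F A)) else 0 := by
  obtain ⟨h1, h2, h3⟩ := mem_gr.1 hU
  obtain ⟨h1', h2', h3'⟩ := mem_gr.1 hU'
  split_ifs with h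
  · subst h
    rw [sup_idem, inf_idem, card_gr_up U B h2 (k+1) h3, card_gr_down A U h1 k h3 hkA]
    ring
  · have hdim := Submodule.finrank_sup_add_finrank_inf_eq U U'
    have hlt : k + 1 < Module.finrank F (U ⊔ U' : Submodule F (Fin d → F)) := by
      rw [← h3]
      refine Submodule.finrank_lt_finrank_of_lt (lt_of_le_of_ne le_sup_left fun he => h ?_)
      exact (Submodule.eq_of_le_of_finrank_eq (by rw [he]; exact le_sup_right)
        (h3'.trans h3.symm)).symm
    by_cases hs : Module.finrank F (U ⊔ U' : Submodule F (Fin d → F)) = k + 2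
    · rw [card_gr_of_finrank_left (sup_le h2 h2') hs,
        card_gr_of_finrank_right (le_inf h1 h1') (by omega)]
      simp
    · rw [gr_empty_left (by omega), gr_empty_right (by omega)]
      simp

lemma sq_expand {α β : Type*} (X : Finset α) (Y : Finset β) (M : α → β → ℝ) (f : α → ℝ) :
    ∑ y ∈ Y, (∑ x ∈ X, M x y * f x) ^ 2 =
      ∑ x ∈ X, ∑ x' ∈ X, f x * f x' * ∑ y ∈ Y, M x y * M x' y := by
  have h : ∀ y ∈ Y, (∑ x ∈ X, M x y * f x) ^ 2 =
      ∑ x ∈ X, ∑ x' ∈ X, (M x y * f x) * (M x' y * f x') := by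
    intro y _
    rw [sq, Finset.sum_mul_sum]
  rw [Finset.sum_congr rfl h, Finset.sum_comm]
  refine Finset.sum_congr rfl fun x _ => ?_
  rw [Finset.sum_comm]
  simp only [Finset.mul_sum]
  exact Finset.sum_congr rfl fun x' _ => Finset.sum_congr rfl fun y _ => by ring

lemma up_down {A B : Submodule F (Fin d → F)} {k : ℕ} (hkA : Module.finrank F A ≤ k)
    (f : Submodule F (Fin d → F) → ℝ) :
    ∑ W ∈ gr A B (k+2), (∑ U ∈ gr A B (k+1), ic U W * f U) ^ 2 =
      ∑ Z ∈ gr A B k, (∑ U ∈ gr A B (k+1), ic Z U * f U) ^ 2 +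
      ((pt (Fintype.card F) (Module.finrank F B - (k+1)) : ℝ)
        - pt (Fintype.card F) (k + 1 - Module.finrank F A)) * ∑ U ∈ gr A B (k+1), f U ^ 2 := by
  rw [sq_expand, sq_expand _ _ (fun U Z => ic Z U), Finset.mul_sum, ← Finset.sum_add_distrib]
  refine Finset.sum_congr rfl fun U hU => ?_
  have e : (((pt (Fintype.card F) (Module.finrank F B - (k+1)) : ℝ)
        - pt (Fintype.card F) (k + 1 - Module.finrank F A)) * f U ^ 2) =
      ∑ U' ∈ gr A B (k+1), f U * f U' * if U = U' then ((pt (Fintype.card F) (Module.finrank F B - (k+1)) : ℝ)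
        - pt (Fintype.card F) (k + 1 - Module.finrank F A)) else 0 := by
    simp only [mul_ite, mul_zero, Finset.sum_ite_eq, hU, if_true]
    ring
  rw [e, ← Finset.sum_add_distrib]
  refine Finset.sum_congr rfl fun U' hU' => ?_
  rw [sum_ic_common_up (mem_gr.1 hU).1, sum_ic_common_down (mem_gr.1 hU).2.1,
    pair_count hkA hU hU', mul_add]

/-- One-step spectral bound. -/
lemma one_step {A B : Submodule F (Fin d → F)} (hAB : A ≤ B) (m : ℕ) :
    ∀ (_ : Module.finrank F A + m + 1 ≤ Module.finrank F B) (f : Submodule F (Fin d → F) → ℝ)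
    (_ : ∑ U ∈ gr A B (Module.finrank F A + m), f U = 0),
    ∑ W ∈ gr A B (Module.finrank F A + m + 1),
      (∑ U ∈ gr A B (Module.finrank F A + m), ic U W * f U) ^ 2 ≤
      ((Fintype.card F : ℝ) * pt (Fintype.card F) m *
        pt (Fintype.card F) (Module.finrank F B - (Module.finrank F A + m + 1))) *
        ∑ U ∈ gr A B (Module.finrank F A + m), f U ^ 2 := by
  induction m with
  | zero =>
    intro hB f hf
    simp only [add_zero] at *
    rw [card_gr_of_finrank_left hAB rfl] at *
    simp only [Finset.sum_singleton] at *
    simp [hf]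
  | succ m ih =>
    intro hB f hf
    have hB' : Module.finrank F A + m + 1 ≤ Module.finrank F B := by omega
    have key := transpose_bound (gr A B (Module.finrank F A + m + 1)) (gr A B (Module.finrank F A + m))
      (fun U Z => ic Z U) _ (pt (Fintype.card F) (Module.finrank F A + m + 1 - Module.finrank F A))
      (by positivity) (by
        intro U hU
        obtain ⟨h1, h2, h3⟩ := mem_gr.1 hU
        rw [sum_ic_left h2, card_gr_down A U h1 _ h3 (by omega)])
      (ih hB') f hf
    have h := up_down (A := A) (B := B) (k := Module.finrank F A + m) (by omega) f
    change ∑ W ∈ gr A B (Module.finrank F A + m + 2),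
      (∑ U ∈ gr A B (Module.finrank F A + m + 1), ic U W * f U) ^ 2 ≤ _
    rw [h]
    refine (add_le_add_left key _).trans (le_of_eq ?_)
    obtain ⟨n, hn⟩ := Nat.exists_eq_add_of_le hB
    have e1 : Module.finrank F B - (Module.finrank F A + m + 1) = n + 1 := by omega
    have e2 : Module.finrank F B - (Module.finrank F A + (m + 1) + 1) = n := by omega
    have e3 : Module.finrank F A + m + 1 - Module.finrank F A = m + 1 := by omega
    rw [e1, e2, e3, pt_succ, pt_succ, ← add_mul]
    change _ * ∑ U ∈ gr A B (Module.finrank F A + m + 1), f U ^ 2 =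
      _ * ∑ U ∈ gr A B (Module.finrank F A + m + 1), f U ^ 2
    congr 1
    push_cast
    ring

lemma ic_comp {A B U W : Submodule F (Fin d → F)} {i j : ℕ} 
    (hU : U ∈ gr A B i) (hW : W ∈ gr A B j) :
    ∑ V ∈ gr A B (i+1), ic U V * ic V W = pt (Fintype.card F) (j - i) * ic U W := by
  obtain ⟨h1, h2, h3⟩ := mem_gr.1 hU
  obtain ⟨h1', h2', h3'⟩ := mem_gr.1 hW
  by_cases h : U ≤ W
  · have e : ∑ V ∈ gr A B (i+1), ic U V * ic V W = (gr U W (i+1)).card := by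
      rw [← sum_ic_left (B := B) h2']
      rw [← Finset.sum_subset (s₁ := gr U B (i+1)) (s₂ := gr A B (i+1))]
      · refine Finset.sum_congr rfl fun V hV => ?_
        simp [ic, (mem_gr.1 hV).1]
      · intro V hV
        rw [mem_gr] at hV ⊢
        exact ⟨h1.trans hV.1, hV.2⟩
      · intro V hV hV'
        rw [mem_gr] at hV hV'
        have : ¬ U ≤ V := fun hh => hV' ⟨hh, hV.2⟩
        simp [ic, this]
    rw [e, card_gr_up U W h i h3, h3']
    simp [ic, h]
  · have : ic U W = 0 := by simp [ic, h]
    rw [this, mul_zero]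
    refine Finset.sum_eq_zero fun V _ => ?_
    by_cases h4 : U ≤ V
    · have : ¬ V ≤ W := fun h5 => h (h4.trans h5)
      simp [ic, this]
    · simp [ic, h4]

lemma pt_pos (q m : ℕ) (hm : 0 < m) : 0 < pt q m := by
  obtain ⟨n, rfl⟩ := Nat.exists_eq_succ_of_ne_zero hm.ne'
  rw [Nat.succ_eq_add_one, pt_succ]
  omega

/-- General bound for inclusion between dimensions `i < j` in an interval. -/
lemma multi_step {A B : Submodule F (Fin d → F)} (hAB : A ≤ B) {i j : ℕ} (hij : i < j)
    (r c : ℕ)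
    (hr : ∀ U ∈ gr A B i, (gr U B j).card = r) (hc : ∀ W ∈ gr A B j, (gr A W i).card = c)
    (f : Submodule F (Fin d → F) → ℝ) (hf : ∑ U ∈ gr A B i, f U = 0) :
    (Fintype.card F : ℝ) * ∑ W ∈ gr A B j, (∑ U ∈ gr A B i, ic U W * f U) ^ 2 ≤
      r * c * ∑ U ∈ gr A B i, f U ^ 2 := by
  -- empty cases
  by_cases hXe : (gr A B i) = ∅
  · simp [hXe]
  by_cases hYe : (gr A B j) = ∅
  · simp only [hYe, Finset.sum_empty, mul_zero]
    have : 0 ≤ ∑ U ∈ gr A B i, f U ^ 2 := Finset.sum_nonneg fun _ _ => sq_nonneg _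
    positivity
  obtain ⟨U0, hU0⟩ := Finset.nonempty_iff_ne_empty.2 hXe
  obtain ⟨W0, hW0⟩ := Finset.nonempty_iff_ne_empty.2 hYe
  have hi : Module.finrank F A ≤ i := (mem_gr.1 hU0).2.2 ▸ Submodule.finrank_mono (mem_gr.1 hU0).1
  have hj : j ≤ Module.finrank F B := (mem_gr.1 hW0).2.2 ▸ Submodule.finrank_mono (mem_gr.1 hW0).2.1
  obtain ⟨m, rfl⟩ := Nat.exists_eq_add_of_le hi
  set a := Module.finrank F A with ha
  set Q := Fintype.card F with hQ
  have hex1 : ∃ r' : ℕ, ∀ V ∈ gr A B (a + m + 1), (gr V B j).card = r' := by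
    by_cases h : (gr A B (a+m+1)) = ∅
    · exact ⟨0, by simp [h]⟩
    · obtain ⟨V0, hV0⟩ := Finset.nonempty_iff_ne_empty.2 h
      refine ⟨_, fun V hV => card_gr_congr (mem_gr.1 hV).2.1 (mem_gr.1 hV0).2.1
        ((mem_gr.1 hV).2.2.trans (mem_gr.1 hV0).2.2.symm) rfl j⟩
  obtain ⟨r', hr'⟩ := hex1
  have hc' : ∀ W ∈ gr A B j, (gr A W (a + m + 1)).card = (gr A W0 (a + m + 1)).card := 
    fun W hW => card_gr_congr (mem_gr.1 hW).1 (mem_gr.1 hW0).1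
        rfl ((mem_gr.1 hW).2.2.trans (mem_gr.1 hW0).2.2.symm) _
  set c' := (gr A W0 (a + m + 1)).card with hc'def
  set p : ℝ := (pt Q (j - (a + m)) : ℝ) with hp
  have hppos : 0 < p := by
    rw [hp]; exact_mod_cast pt_pos _ _ (by omega)
  have hup : ∀ U ∈ gr A B (a + m), ((gr U B (a+m+1)).card : ℝ) = pt Q (Module.finrank F B - (a+m)) := 
    fun U hU => by rw [card_gr_up U B (mem_gr.1 hU).2.1 _ (mem_gr.1 hU).2.2]
  have hdn : ∀ V ∈ gr A B (a + m + 1), ((gr A V (a+m)).card : ℝ) = pt Q (m + 1) := 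
    fun V hV => by
      rw [card_gr_down A V (mem_gr.1 hV).1 _ (mem_gr.1 hV).2.2 (by omega)]
      congr 2
      omega
  -- degree identities
  have hdegr : pt Q (Module.finrank F B - (a+m)) * r' = p * r := by
    have h1 : ∑ W ∈ gr A B j, ∑ V ∈ gr A B (a+m+1), ic U0 V * ic V W =
        ∑ W ∈ gr A B j, p * ic U0 W :=
      Finset.sum_congr rfl fun W hW => ic_comp hU0 hW
    rw [← Finset.mul_sum, sum_ic_right (mem_gr.1 hU0).1, hr U0 hU0, Finset.sum_comm] at h1
    rw [← h1, ← hup U0 hU0, ← sum_ic_right (mem_gr.1 hU0).1, Finset.sum_mul]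
    refine Finset.sum_congr rfl fun V hV => ?_
    rw [← Finset.mul_sum, sum_ic_right (mem_gr.1 hV).1, hr' V hV]
  have hdegc : pt Q (m+1) * c' = p * c := by
    have h1 : ∑ U ∈ gr A B (a+m), ∑ V ∈ gr A B (a+m+1), ic U V * ic V W0 =
        ∑ U ∈ gr A B (a+m), p * ic U W0 :=
      Finset.sum_congr rfl fun U hU => ic_comp hU hW0
    rw [← Finset.mul_sum, sum_ic_left (mem_gr.1 hW0).2.1, hc W0 hW0, Finset.sum_comm] at h1
    rw [← h1, hc'def, ← sum_ic_left (mem_gr.1 hW0).2.1, Finset.mul_sum]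
    refine Finset.sum_congr rfl fun V hV => ?_
    rw [← Finset.sum_mul, sum_ic_left (mem_gr.1 hV).2.1, hdn V hV]
  -- composition
  have hcomp : ∀ W ∈ gr A B j, p * ∑ U ∈ gr A B (a+m), ic U W * f U =
      ∑ V ∈ gr A B (a+m+1), ic V W * ∑ U ∈ gr A B (a+m), ic U V * f U := by
    intro W hW
    simp only [Finset.mul_sum]
    rw [Finset.sum_comm]
    refine Finset.sum_congr rfl fun U hU => ?_
    rw [← mul_assoc, ← ic_comp hU hW, Finset.sum_mul]
    exact Finset.sum_congr rfl fun V _ => by ring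
  have h1 := schur_bound (gr A B (a+m+1)) (gr A B j) ic r' c'
    (fun x _ y _ => by unfold ic; split_ifs <;> norm_num)
    (fun V hV => by rw [sum_ic_right (mem_gr.1 hV).1, hr' V hV])
    (fun W hW => by rw [sum_ic_left (mem_gr.1 hW).2.1, hc' W hW])
    (fun V => ∑ U ∈ gr A B (a+m), ic U V * f U)
  have h2 := one_step hAB m (by omega) f hf
  rw [← ha, ← hQ] at h2
  have e : ∑ W ∈ gr A B j, (∑ V ∈ gr A B (a+m+1), ic V W * ∑ U ∈ gr A B (a+m), ic U V * f U) ^ 2 =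
      p ^ 2 * ∑ W ∈ gr A B j, (∑ U ∈ gr A B (a+m), ic U W * f U) ^ 2 := by
    rw [Finset.mul_sum]
    refine Finset.sum_congr rfl fun W hW => ?_
    rw [← hcomp W hW, mul_pow]
  rw [e] at h1
  set N := ∑ U ∈ gr A B (a+m), f U ^ 2 with hN
  have hN0 : 0 ≤ N := Finset.sum_nonneg fun _ _ => sq_nonneg _
  set T := ∑ W ∈ gr A B j, (∑ U ∈ gr A B (a+m), ic U W * f U) ^ 2 with hT
  obtain ⟨n, hn⟩ := Nat.exists_eq_add_of_le (show a + m + 1 ≤ Module.finrank F B by omega)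
  have e1 : Module.finrank F B - (a + m + 1) = n := by omega
  have e2 : Module.finrank F B - (a + m) = n + 1 := by omega
  rw [e1] at h2
  rw [e2] at hdegr
  have hb : (Q : ℝ) * (Q * pt Q m * pt Q n) ≤ pt Q (m+1) * pt Q (n+1) := by
    rw [pt_succ, pt_succ]
    push_cast
    have : (0:ℝ) ≤ Q * pt Q m := by positivity
    have : (0:ℝ) ≤ Q * pt Q n := by positivity
    nlinarith
  have h3 : p ^ 2 * (Q * T) ≤ p ^ 2 * (r * c * N) := by
    calc p ^ 2 * (Q * T) = Q * (p ^ 2 * T) := by ring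
      _ ≤ Q * (r' * c' * (Q * pt Q m * pt Q n * N)) := by
        refine mul_le_mul_of_nonneg_left (h1.trans ?_) (by positivity)
        exact mul_le_mul_of_nonneg_left h2
          (mul_nonneg (Nat.cast_nonneg _) (Nat.cast_nonneg _))
      _ = r' * c' * N * (Q * (Q * pt Q m * pt Q n)) := by ring
      _ ≤ r' * c' * N * (pt Q (m+1) * pt Q (n+1)) :=
        mul_le_mul_of_nonneg_left hb
          (mul_nonneg (mul_nonneg (Nat.cast_nonneg _) (Nat.cast_nonneg _)) hN0)
      _ = (pt Q (n+1) * r') * (pt Q (m+1) * c') * N := by ring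
      _ = p ^ 2 * (r * c * N) := by rw [hdegr, hdegc]; ring
  exact le_of_mul_le_mul_left h3 (pow_pos hppos 2)

/-- `W` is comparable to every member of `σ`. -/
def Compat (σ : Finset (Submodule F (Fin d → F))) (W : Submodule F (Fin d → F)) : Prop :=
  ∀ X ∈ σ, X ≤ W ∨ W ≤ X

lemma le_of_chain {σ : Finset (Submodule F (Fin d → F))}
    (hσ : IsChain (· ≤ ·) (σ : Set (Submodule F (Fin d → F)))) {X Y : Submodule F (Fin d → F)}
    (hX : X ∈ σ) (hY : Y ∈ σ) (h : Module.finrank F X ≤ Module.finrank F Y) : X ≤ Y := by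
  rcases hσ.total hX hY with h1 | h1
  · exact h1
  · exact (Submodule.eq_of_le_of_finrank_le h1 h).ge

lemma exists_lower (σ : Finset (Submodule F (Fin d → F)))
    (hσ : IsChain (· ≤ ·) (σ : Set (Submodule F (Fin d → F)))) (s : ℕ) :
    ∃ A : Submodule F (Fin d → F),
      Module.finrank F A = (((σ.image fun W : Submodule F (Fin d → F) => Module.finrank F W).filter (· < s)).sup id) ∧
      (∀ X ∈ σ, Module.finrank F X < s → X ≤ A) ∧
      (A = ⊥ ∨ (A ∈ σ ∧ Module.finrank F A < s)) := by
  by_cases h : (σ.filter fun W : Submodule F (Fin d → F) => Module.finrank F W < s).Nonempty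
  · obtain ⟨A, hA, hmax⟩ := Finset.exists_max_image _ (fun W : Submodule F (Fin d → F) => Module.finrank F W) h
    rw [Finset.mem_filter] at hA
    refine ⟨A, le_antisymm ?_ ?_, ?_, Or.inr hA⟩
    · exact Finset.le_sup (f := id) (Finset.mem_filter.2 ⟨Finset.mem_image_of_mem _ hA.1, hA.2⟩)
    · refine Finset.sup_le fun x hx => ?_
      obtain ⟨hx1, hx2⟩ := Finset.mem_filter.1 hx
      obtain ⟨X, hX, rfl⟩ := Finset.mem_image.1 hx1
      exact hmax X (Finset.mem_filter.2 ⟨hX, hx2⟩)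
    · intro X hX hXs
      exact le_of_chain hσ hX hA.1 (hmax X (Finset.mem_filter.2 ⟨hX, hXs⟩))
  · have h' : ∀ X ∈ σ, ¬ Module.finrank F X < s := fun X hX hXs =>
      h ⟨X, Finset.mem_filter.2 ⟨hX, hXs⟩⟩
    refine ⟨⊥, ?_, fun X hX hXs => absurd hXs (h' X hX), Or.inl rfl⟩
    have : ((σ.image fun W : Submodule F (Fin d → F) => Module.finrank F W).filter (· < s)) = ∅ := by
      rw [Finset.eq_empty_iff_forall_notMem]
      intro x hx
      obtain ⟨hx1, hx2⟩ := Finset.mem_filter.1 hx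
      obtain ⟨X, hX, rfl⟩ := Finset.mem_image.1 hx1
      exact h' X hX hx2
    rw [this]
    simp

/-- Smallest element of a finset of naturals, `d` if it is empty. -/
noncomputable def minD (d : ℕ) (t : Finset ℕ) : ℕ := if h : t.Nonempty then t.min' h else d

lemma exists_upper (σ : Finset (Submodule F (Fin d → F)))
    (hσ : IsChain (· ≤ ·) (σ : Set (Submodule F (Fin d → F)))) (s : ℕ) :
    ∃ B : Submodule F (Fin d → F),
      Module.finrank F B = minD d ((σ.image fun W : Submodule F (Fin d → F) => Module.finrank F W).filter (s < ·)) ∧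
      (∀ X ∈ σ, s < Module.finrank F X → B ≤ X) ∧
      (B = ⊤ ∨ (B ∈ σ ∧ s < Module.finrank F B)) := by
  by_cases h : (σ.filter fun W : Submodule F (Fin d → F) => s < Module.finrank F W).Nonempty
  · obtain ⟨B, hB, hmin⟩ := Finset.exists_min_image _ (fun W : Submodule F (Fin d → F) => Module.finrank F W) h
    rw [Finset.mem_filter] at hB
    have hmem : Module.finrank F B ∈ (σ.image fun W : Submodule F (Fin d → F) => Module.finrank F W).filter (s < ·) :=
      Finset.mem_filter.2 ⟨Finset.mem_image_of_mem _ hB.1, hB.2⟩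
    refine ⟨B, ?_, ?_, Or.inr hB⟩
    · rw [minD, dif_pos ⟨_, hmem⟩]
      refine le_antisymm ?_ (Finset.min'_le _ _ hmem)
      refine Finset.le_min' _ _ _ fun x hx => ?_
      obtain ⟨hx1, hx2⟩ := Finset.mem_filter.1 hx
      obtain ⟨X, hX, rfl⟩ := Finset.mem_image.1 hx1
      exact hmin X (Finset.mem_filter.2 ⟨hX, hx2⟩)
    · intro X hX hXs
      exact le_of_chain hσ hB.1 hX (hmin X (Finset.mem_filter.2 ⟨hX, hXs⟩))
  · have h' : ∀ X ∈ σ, ¬ s < Module.finrank F X := fun X hX hXs =>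
      h ⟨X, Finset.mem_filter.2 ⟨hX, hXs⟩⟩
    refine ⟨⊤, ?_, fun X hX hXs => absurd hXs (h' X hX), Or.inl rfl⟩
    have : ¬ ((σ.image fun W : Submodule F (Fin d → F) => Module.finrank F W).filter (s < ·)).Nonempty := by
      rintro ⟨x, hx⟩
      obtain ⟨hx1, hx2⟩ := Finset.mem_filter.1 hx
      obtain ⟨X, hX, rfl⟩ := Finset.mem_image.1 hx1
      exact h' X hX hx2
    rw [minD, dif_neg this]
    simp

lemma exists_interval (σ : Finset (Submodule F (Fin d → F)))
    (hσ : IsChain (· ≤ ·) (σ : Set (Submodule F (Fin d → F)))) (s : ℕ) :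
    ∃ A B : Submodule F (Fin d → F), A ≤ B ∧
      Module.finrank F A = (((σ.image fun W : Submodule F (Fin d → F) => Module.finrank F W).filter (· < s)).sup id) ∧
      Module.finrank F B = minD d ((σ.image fun W : Submodule F (Fin d → F) => Module.finrank F W).filter (s < ·)) ∧
      ∀ t, (∀ X ∈ σ, (Module.finrank F X < s ↔ Module.finrank F X < t) ∧
          (s < Module.finrank F X ↔ t < Module.finrank F X) ∧ Module.finrank F X ≠ t) →
        ∀ W : Submodule F (Fin d → F), Module.finrank F W = t →
          (Compat σ W ↔ A ≤ W ∧ W ≤ B) := by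
  obtain ⟨A, hA1, hA2, hA3⟩ := exists_lower σ hσ s
  obtain ⟨B, hB1, hB2, hB3⟩ := exists_upper σ hσ s
  refine ⟨A, B, ?_, hA1, hB1, ?_⟩
  · rcases hA3 with rfl | hA3
    · exact bot_le
    rcases hB3 with rfl | hB3
    · exact le_top
    exact le_of_chain hσ hA3.1 hB3.1 (by omega)
  · intro t ht W hW
    constructor
    · intro hc
      constructor
      · rcases hA3 with rfl | hA3
        · exact bot_le
        rcases hc A hA3.1 with h | h
        · exact h
        · have := Submodule.finrank_mono h
          have := (ht A hA3.1).1.1 hA3.2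
          omega
      · rcases hB3 with rfl | hB3
        · exact le_top
        rcases hc B hB3.1 with h | h
        · have := Submodule.finrank_mono h
          have := (ht B hB3.1).2.1.1 hB3.2
          omega
        · exact h
    · rintro ⟨h1, h2⟩ X hX
      obtain ⟨hx1, hx2, hx3⟩ := ht X hX
      rcases lt_or_gt_of_ne hx3 with h | h
      · exact Or.inl ((hA2 X hX (hx1.2 h)).trans h1)
      · exact Or.inr (h2.trans (hB2 X hX (hx2.2 h)))

lemma isFlagFace_insert {S : Finset ℕ} {σ : Finset (Submodule F (Fin d → F))}
    {W : Submodule F (Fin d → F)} (hW : Module.finrank F W ∈ S) :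
    IsFlagFace F d S (insert W σ) ↔ IsFlagFace F d S σ ∧ Compat σ W := by
  constructor
  · rintro ⟨h1, h2⟩
    refine ⟨⟨h1.mono (by simp), fun X hX => h2 X (Finset.mem_insert_of_mem hX)⟩, fun X hX => ?_⟩
    exact h1.total (Finset.mem_coe.2 (Finset.mem_insert_of_mem hX))
      (Finset.mem_coe.2 (Finset.mem_insert_self W σ))
  · rintro ⟨⟨h1, h2⟩, h3⟩
    constructor
    · rw [Finset.coe_insert]
      exact h1.insert fun X hX _ => (h3 X hX).symm
    · intro X hX
      rcases Finset.mem_insert.1 hX with rfl | hX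
      · exact hW
      · exact h2 X hX

lemma mem_maxFaces {S : Finset ℕ} {σ T : Finset (Submodule F (Fin d → F))} :
    T ∈ maxFacesAbove F d S σ ↔ IsMaxFlagFace F d S T ∧ σ ⊆ T := by
  simp [maxFacesAbove]

lemma maxFaces_eq_empty {S : Finset ℕ} {σ : Finset (Submodule F (Fin d → F))}
    (h : ¬ IsFlagFace F d S σ) : maxFacesAbove F d S σ = ∅ := by
  rw [Finset.eq_empty_iff_forall_notMem]
  intro T hT
  obtain ⟨hT1, hT2⟩ := mem_maxFaces.1 hT
  exact h ⟨hT1.1.1.mono (Finset.coe_subset.2 hT2), fun W hW => hT1.1.2 W (hT2 hW)⟩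

/-- Each maximal face has exactly one member of each dimension in `S`. -/
lemma exists_filter_eq {S : Finset ℕ} {T : Finset (Submodule F (Fin d → F))}
    (hT : IsMaxFlagFace F d S T) {s : ℕ} (hs : s ∈ S) :
    ∃ W, T.filter (fun W : Submodule F (Fin d → F) => Module.finrank F W = s) = {W} := by
  obtain ⟨W, hW, hWs⟩ := hT.2 s hs
  refine ⟨W, ?_⟩
  ext X
  simp only [Finset.mem_filter, Finset.mem_singleton]
  constructor
  · rintro ⟨h1, h2⟩
    exact le_antisymm (le_of_chain hT.1.1 h1 hW (by omega)) (le_of_chain hT.1.1 hW h1 (by omega))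
  · rintro rfl; exact ⟨hW, hWs⟩

lemma card_maxFaces_step {S : Finset ℕ} {σ : Finset (Submodule F (Fin d → F))} {s : ℕ}
    (hs : s ∈ S) :
    (maxFacesAbove F d S σ).card =
      ∑ W ∈ Finset.univ.filter (fun W : Submodule F (Fin d → F) => Module.finrank F W = s),
        (maxFacesAbove F d S (insert W σ)).card := by
  have h1 : (maxFacesAbove F d S σ).card = ∑ T ∈ maxFacesAbove F d S σ,
      ∑ W ∈ Finset.univ.filter (fun W : Submodule F (Fin d → F) => Module.finrank F W = s),
        if W ∈ T then 1 else 0 := by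
    rw [Finset.card_eq_sum_ones]
    refine Finset.sum_congr rfl fun T hT => ?_
    obtain ⟨W, hW⟩ := exists_filter_eq (mem_maxFaces.1 hT).1 hs
    rw [← Finset.card_filter, Finset.filter_filter]
    symm
    rw [Finset.card_eq_one]
    refine ⟨W, ?_⟩
    rw [← hW]
    ext X
    simp [and_comm]
  rw [h1, Finset.sum_comm]
  refine Finset.sum_congr rfl fun W _ => ?_
  rw [← Finset.card_filter]
  congr 1
  ext T
  simp only [Finset.mem_filter, mem_maxFaces, Finset.insert_subset_iff]
  tauto

lemma card_maxFaces_congr {S : Finset ℕ} (n : ℕ) :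
    ∀ σ σ' : Finset (Submodule F (Fin d → F)), IsFlagFace F d S σ → IsFlagFace F d S σ' →
      (σ.image fun W : Submodule F (Fin d → F) => Module.finrank F W) = (σ'.image fun W : Submodule F (Fin d → F) => Module.finrank F W) →
      (S \ σ.image fun W : Submodule F (Fin d → F) => Module.finrank F W).card = n →
      (maxFacesAbove F d S σ).card = (maxFacesAbove F d S σ').card := by
  induction n with
  | zero =>
    have key : ∀ σ : Finset (Submodule F (Fin d → F)), IsFlagFace F d S σ →
        (S \ σ.image fun W : Submodule F (Fin d → F) => Module.finrank F W).card = 0 → maxFacesAbove F d S σ = {σ} := by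
      intro σ hσ h
      rw [Finset.card_eq_zero, Finset.sdiff_eq_empty_iff_subset] at h
      have hmax : ∀ i ∈ S, ∃ W ∈ σ, Module.finrank F W = i := fun i hi =>
        Finset.mem_image.1 (h hi)
      ext T
      rw [mem_maxFaces, Finset.mem_singleton]
      constructor
      · rintro ⟨hT, hsub⟩
        refine Finset.Subset.antisymm (fun X hX => ?_) hsub
        obtain ⟨W, hW, hWX⟩ := hmax _ (hT.1.2 X hX)
        have : X = W := le_antisymm (le_of_chain hT.1.1 hX (hsub hW) hWX.ge)
          (le_of_chain hT.1.1 (hsub hW) hX hWX.le)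
        rwa [this]
      · rintro rfl
        exact ⟨⟨hσ, hmax⟩, Finset.Subset.refl _⟩
    intro σ σ' hσ hσ' himg hn
    rw [key σ hσ hn, key σ' hσ' (himg ▸ hn)]
    simp
  | succ n ih =>
    intro σ σ' hσ hσ' himg hn
    obtain ⟨s, hs⟩ : (S \ σ.image fun W : Submodule F (Fin d → F) => Module.finrank F W).Nonempty :=
      Finset.card_pos.1 (by omega)
    obtain ⟨hsS, hsσ⟩ := Finset.mem_sdiff.1 hs
    have step : ∀ σ : Finset (Submodule F (Fin d → F)), IsFlagFace F d S σ →
        s ∉ (σ.image fun W : Submodule F (Fin d → F) => Module.finrank F W) → ∃ A B : Submodule F (Fin d → F), A ≤ B ∧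
      Module.finrank F A = (((σ.image fun W : Submodule F (Fin d → F) => Module.finrank F W).filter (· < s)).sup id) ∧
      Module.finrank F B = minD d ((σ.image fun W : Submodule F (Fin d → F) => Module.finrank F W).filter (s < ·)) ∧
      (∀ W ∈ gr A B s, IsFlagFace F d S (insert W σ)) ∧
      (maxFacesAbove F d S σ).card = ∑ W ∈ gr A B s, (maxFacesAbove F d S (insert W σ)).card := by
      intro σ hσ hsσ
      obtain ⟨A, B, hAB, hA, hB, hc⟩ := exists_interval σ hσ.1 s
      have hc := hc s (fun X hX => ⟨Iff.rfl, Iff.rfl, fun h => hsσ (h ▸ Finset.mem_image_of_mem _ hX)⟩)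
      refine ⟨A, B, hAB, hA, hB, ?_, ?_⟩
      · intro W hW
        obtain ⟨h1, h2, h3⟩ := mem_gr.1 hW
        exact (isFlagFace_insert (h3.symm ▸ hsS)).2 ⟨hσ, (hc W h3).2 ⟨h1, h2⟩⟩
      · rw [card_maxFaces_step hsS]
        symm
        refine Finset.sum_subset ?_ ?_
        · intro W hW
          simp [(mem_gr.1 hW).2.2]
        · intro W hW hW'
          have h3 : Module.finrank F W = s := by simpa using hW
          rw [maxFaces_eq_empty, Finset.card_empty]
          intro hface
          have := (hc W h3).1 ((isFlagFace_insert (h3.symm ▸ hsS)).1 hface).2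
          exact hW' (mem_gr.2 ⟨this.1, this.2, h3⟩)
    obtain ⟨A, B, hAB, hA, hB, hf, hsum⟩ := step σ hσ hsσ
    obtain ⟨A', B', hAB', hA', hB', hf', hsum'⟩ := step σ' hσ' (himg ▸ hsσ)
    have hcard : (gr A B s).card = (gr A' B' s).card :=
      card_gr_congr hAB hAB' (by rw [hA, hA', himg]) (by rw [hB, hB', himg]) s
    have hins : ∀ (σ : Finset (Submodule F (Fin d → F))) (A B : Submodule F (Fin d → F)),
        ∀ W ∈ gr A B s, ((insert W σ).image fun W : Submodule F (Fin d → F) => Module.finrank F W) =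
        insert s (σ.image fun W : Submodule F (Fin d → F) => Module.finrank F W) := by
      intro σ A B W hW
      rw [Finset.image_insert, (mem_gr.1 hW).2.2]
    have heq : ∀ W ∈ gr A B s, ∀ W' ∈ gr A' B' s, (maxFacesAbove F d S (insert W σ)).card =
        (maxFacesAbove F d S (insert W' σ')).card := by
      intro W hW W' hW'
      refine ih _ _ (hf W hW) (hf' W' hW') ?_ ?_
      · rw [hins σ A B W hW, hins σ' A' B' W' hW', himg]
      · rw [hins σ A B W hW, Finset.sdiff_insert, Finset.card_erase_of_mem hs, hn]
        rfl
    rw [hsum, hsum']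
    by_cases hne : (gr A' B' s).Nonempty
    · obtain ⟨W0, hW0⟩ := hne
      have hne2 : (gr A B s).Nonempty := by
        rw [← Finset.card_pos, hcard]; exact Finset.card_pos.2 ⟨W0, hW0⟩
      obtain ⟨W1, hW1⟩ := hne2
      rw [Finset.sum_congr rfl (fun W hW => heq W hW W0 hW0),
        Finset.sum_congr rfl (fun W hW => (heq W1 hW1 W hW).symm.trans (heq W1 hW1 W0 hW0))]
      simp [hcard]
    · rw [Finset.not_nonempty_iff_eq_empty] at hne
      rw [hne, Finset.card_empty, Finset.card_eq_zero] at hcard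
      rw [hne, hcard, Finset.sum_empty, Finset.sum_empty]

/-- Sums over maximal faces as sums over pairs. -/
lemma sum_maxFaces {S : Finset ℕ} {τ : Finset (Submodule F (Fin d → F))} {i j : ℕ}
    (f g : Submodule F (Fin d → F) → ℝ) :
    (∑ T ∈ maxFacesAbove F d S τ,
      (∑ W ∈ T.filter (fun W : Submodule F (Fin d → F) => Module.finrank F W = i), f W) *
        (∑ W ∈ T.filter (fun W : Submodule F (Fin d → F) => Module.finrank F W = j), g W)) =
    ∑ U ∈ Finset.univ.filter (fun W : Submodule F (Fin d → F) => Module.finrank F W = i),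
      ∑ W ∈ Finset.univ.filter (fun W : Submodule F (Fin d → F) => Module.finrank F W = j),
        f U * g W * ((maxFacesAbove F d S (insert U (insert W τ))).card : ℝ) := by
  have h1 : ∀ (T : Finset (Submodule F (Fin d → F))) (k : ℕ) (f : Submodule F (Fin d → F) → ℝ),
      ∑ W ∈ T.filter (fun W : Submodule F (Fin d → F) => Module.finrank F W = k), f W =
      ∑ W ∈ Finset.univ.filter (fun W : Submodule F (Fin d → F) => Module.finrank F W = k),
        if W ∈ T then f W else 0 := by
    intro T k f
    rw [← Finset.sum_filter, Finset.filter_filter]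
    refine Finset.sum_congr ?_ fun _ _ => rfl
    ext X
    simp [and_comm]
  rw [Finset.sum_congr rfl fun T _ => by rw [h1 T i f, h1 T j g, Finset.sum_mul_sum],
    Finset.sum_comm]
  refine Finset.sum_congr rfl fun U _ => ?_
  rw [Finset.sum_comm]
  refine Finset.sum_congr rfl fun W _ => ?_
  have e : maxFacesAbove F d S (insert U (insert W τ)) =
      (maxFacesAbove F d S τ).filter fun T => U ∈ T ∧ W ∈ T := by
    ext T
    simp only [Finset.mem_filter, mem_maxFaces, Finset.insert_subset_iff]
    tauto
  rw [e, Finset.card_filter, Nat.cast_sum, Finset.mul_sum]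
  refine Finset.sum_congr rfl fun T _ => ?_
  by_cases hU : U ∈ T <;> by_cases hW : W ∈ T <;> simp [hU, hW]

/-- The vertices of dimension `k` in the link of `τ`. -/
noncomputable def lk (τ : Finset (Submodule F (Fin d → F))) (k : ℕ) :
    Finset (Submodule F (Fin d → F)) :=
  Finset.univ.filter fun W => Module.finrank F W = k ∧ Compat τ W

lemma mem_lk {τ : Finset (Submodule F (Fin d → F))} {k : ℕ} {W : Submodule F (Fin d → F)} :
    W ∈ lk τ k ↔ Module.finrank F W = k ∧ Compat τ W := by
  simp [lk]

lemma link_structure {τ : Finset (Submodule F (Fin d → F))}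
    (hτ : IsChain (· ≤ ·) (τ : Set (Submodule F (Fin d → F)))) {i j : ℕ} (hij : i < j)
    (hiτ : ∀ W ∈ τ, Module.finrank F W ≠ i) (hjτ : ∀ W ∈ τ, Module.finrank F W ≠ j) :
    ∃ r c : ℕ, (∀ U ∈ lk τ i, ∑ W ∈ lk τ j, ic U W = r) ∧
      (∀ W ∈ lk τ j, ∑ U ∈ lk τ i, ic U W = c) ∧
      ∀ f : Submodule F (Fin d → F) → ℝ, ∑ U ∈ lk τ i, f U = 0 →
        (Fintype.card F : ℝ) * ∑ W ∈ lk τ j, (∑ U ∈ lk τ i, ic U W * f U) ^ 2 ≤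
          r * c * ∑ U ∈ lk τ i, f U ^ 2 := by
  by_cases hmid : ∃ X ∈ τ, i < Module.finrank F X ∧ Module.finrank F X < j
  · obtain ⟨X, hX, hX1, hX2⟩ := hmid
    have hic : ∀ U ∈ lk τ i, ∀ W ∈ lk τ j, ic U W = 1 := by
      intro U hU W hW
      obtain ⟨hU1, hU2⟩ := mem_lk.1 hU
      obtain ⟨hW1, hW2⟩ := mem_lk.1 hW
      have h1 : U ≤ X := by
        rcases hU2 X hX with h | h
        · have := Submodule.finrank_mono h
          omega
        · exact h
      have h2 : X ≤ W := by
        rcases hW2 X hX with h | h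
        · exact h
        · have := Submodule.finrank_mono h
          omega
      simp [ic, h1.trans h2]
    refine ⟨(lk τ j).card, (lk τ i).card, ?_, ?_, ?_⟩
    · intro U hU
      rw [Finset.sum_congr rfl (hic U hU)]
      simp
    · intro W hW
      rw [Finset.sum_congr rfl (fun U hU => hic U hU W hW)]
      simp
    · intro f hf
      have : ∀ W ∈ lk τ j, (∑ U ∈ lk τ i, ic U W * f U) ^ 2 = 0 := by
        intro W hW
        rw [Finset.sum_congr rfl (fun U hU => by rw [hic U hU W hW, one_mul]), hf]
        norm_num
      rw [Finset.sum_congr rfl this, Finset.sum_const_zero, mul_zero]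
      exact mul_nonneg (mul_nonneg (Nat.cast_nonneg _) (Nat.cast_nonneg _))
        (Finset.sum_nonneg fun _ _ => sq_nonneg _)
  · obtain ⟨A, B, hAB, -, -, hc⟩ := exists_interval τ hτ i
    have hi : lk τ i = gr A B i := by
      ext W
      rw [mem_lk, mem_gr]
      have := hc i (fun X hX => ⟨Iff.rfl, Iff.rfl, hiτ X hX⟩) W
      tauto
    have hj : lk τ j = gr A B j := by
      ext W
      rw [mem_lk, mem_gr]
      have := hc j (fun X hX => by
        have h1 := hiτ X hX
        have h2 := hjτ X hX
        have h3 : ¬ (i < Module.finrank F X ∧ Module.finrank F X < j) := fun h => hmid ⟨X, hX, h⟩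
        omega) W
      tauto
    have hr : ∃ r : ℕ, ∀ U ∈ gr A B i, (gr U B j).card = r := by
      by_cases h : gr A B i = ∅
      · exact ⟨0, by simp [h]⟩
      · obtain ⟨U0, hU0⟩ := Finset.nonempty_iff_ne_empty.2 h
        exact ⟨_, fun U hU => card_gr_congr (mem_gr.1 hU).2.1 (mem_gr.1 hU0).2.1
          ((mem_gr.1 hU).2.2.trans (mem_gr.1 hU0).2.2.symm) rfl j⟩
    have hcc : ∃ c : ℕ, ∀ W ∈ gr A B j, (gr A W i).card = c := by
      by_cases h : gr A B j = ∅
      · exact ⟨0, by simp [h]⟩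
      · obtain ⟨W0, hW0⟩ := Finset.nonempty_iff_ne_empty.2 h
        exact ⟨_, fun W hW => card_gr_congr (mem_gr.1 hW).1 (mem_gr.1 hW0).1 rfl
          ((mem_gr.1 hW).2.2.trans (mem_gr.1 hW0).2.2.symm) i⟩
    obtain ⟨r, hr⟩ := hr
    obtain ⟨c, hcc⟩ := hcc
    rw [hi, hj]
    refine ⟨r, c, ?_, ?_, fun f hf => multi_step hAB hij r c hr hcc f hf⟩
    · intro U hU
      rw [sum_ic_right (mem_gr.1 hU).1, hr U hU]
    · intro W hW
      rw [sum_ic_left (mem_gr.1 hW).2.1, hcc W hW]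

lemma sum_pairs {S : Finset ℕ} {τ : Finset (Submodule F (Fin d → F))}
    (hτ : IsFlagFace F d S τ) {i j : ℕ} (hi : i ∈ S) (hj : j ∈ S) (hij : i < j) :
    ∃ n0 : ℕ, ∀ f g : Submodule F (Fin d → F) → ℝ,
    (∑ T ∈ maxFacesAbove F d S τ,
      (∑ W ∈ T.filter (fun W : Submodule F (Fin d → F) => Module.finrank F W = i), f W) *
        (∑ W ∈ T.filter (fun W : Submodule F (Fin d → F) => Module.finrank F W = j), g W)) =
    n0 * ∑ U ∈ lk τ i, ∑ W ∈ lk τ j, ic U W * (f U * g W) := by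
  have hface : ∀ U W : Submodule F (Fin d → F), Module.finrank F U = i → Module.finrank F W = j →
      (IsFlagFace F d S (insert U (insert W τ)) ↔ Compat τ U ∧ Compat τ W ∧ U ≤ W) := by
    intro U W hU hW
    rw [isFlagFace_insert (hU.symm ▸ hi), isFlagFace_insert (hW.symm ▸ hj)]
    constructor
    · rintro ⟨⟨-, h1⟩, h2⟩
      refine ⟨fun X hX => h2 X (Finset.mem_insert_of_mem hX), h1, ?_⟩
      rcases h2 W (Finset.mem_insert_self _ _) with h | h
      · have := Submodule.finrank_mono h
        omega
      · exact h
    · rintro ⟨h1, h2, h3⟩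
      refine ⟨⟨hτ, h2⟩, fun X hX => ?_⟩
      rcases Finset.mem_insert.1 hX with rfl | hX
      · exact Or.inr h3
      · exact h1 X hX
  have hN : ∃ n0 : ℕ, ∀ U ∈ lk τ i, ∀ W ∈ lk τ j, U ≤ W →
      (maxFacesAbove F d S (insert U (insert W τ))).card = n0 := by
    by_cases h : ∃ U0 ∈ lk τ i, ∃ W0 ∈ lk τ j, U0 ≤ W0
    · obtain ⟨U0, hU0, W0, hW0, h0⟩ := h
      refine ⟨(maxFacesAbove F d S (insert U0 (insert W0 τ))).card, fun U hU W hW hUW => ?_⟩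
      rw [mem_lk] at hU0 hW0 hU hW
      refine card_maxFaces_congr _ _ _ ((hface U W hU.1 hW.1).2 ⟨hU.2, hW.2, hUW⟩)
        ((hface U0 W0 hU0.1 hW0.1).2 ⟨hU0.2, hW0.2, h0⟩) ?_ rfl
      simp only [Finset.image_insert, hU.1, hW.1, hU0.1, hW0.1]
    · exact ⟨0, fun U hU W hW hUW => absurd ⟨U, hU, W, hW, hUW⟩ h⟩
  obtain ⟨n0, hN⟩ := hN
  refine ⟨n0, fun f g => ?_⟩
  rw [sum_maxFaces, Finset.mul_sum]
  have hz : ∀ U W : Submodule F (Fin d → F), Module.finrank F U = i → Module.finrank F W = j →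
      ¬ (Compat τ U ∧ Compat τ W ∧ U ≤ W) →
      ((maxFacesAbove F d S (insert U (insert W τ))).card : ℝ) = 0 := by
    intro U W hU hW h
    rw [maxFaces_eq_empty (fun hh => h ((hface U W hU hW).1 hh))]
    simp
  symm
  have hsub : ∀ k, lk τ k ⊆
      Finset.univ.filter (fun W : Submodule F (Fin d → F) => Module.finrank F W = k) := by
    intro k W hW
    simp [(mem_lk.1 hW).1]
  have hin : ∀ U ∈ lk τ i, n0 * ∑ W ∈ lk τ j, ic U W * (f U * g W) =
      ∑ W ∈ Finset.univ.filter (fun W : Submodule F (Fin d → F) => Module.finrank F W = j),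
        f U * g W * ((maxFacesAbove F d S (insert U (insert W τ))).card : ℝ) := by
    intro U hU
    rw [← Finset.sum_subset (hsub j), Finset.mul_sum]
    · refine Finset.sum_congr rfl fun W hW => ?_
      by_cases hUW : U ≤ W
      · rw [hN U hU W hW hUW]
        simp only [ic, hUW, if_true]
        ring
      · rw [hz U W (mem_lk.1 hU).1 (mem_lk.1 hW).1 (fun h => hUW h.2.2)]
        simp [ic, hUW]
    · intro W hW hW'
      have hWj : Module.finrank F W = j := by simpa using hW
      rw [hz U W (mem_lk.1 hU).1 hWj (fun h => hW' (mem_lk.2 ⟨hWj, h.2.1⟩)), mul_zero]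
  rw [Finset.sum_congr rfl hin]
  refine Finset.sum_subset (hsub i) fun U hU hU' => Finset.sum_eq_zero fun W hW => ?_
  have hUi : Module.finrank F U = i := by simpa using hU
  have hWj : Module.finrank F W = j := by simpa using hW
  rw [hz U W hUi hWj (fun h => hU' (mem_lk.2 ⟨hUi, h.1⟩)), mul_zero]

lemma main_lt (S : Finset ℕ)
    (τ : Finset (Submodule F (Fin d → F))) (hτ : IsFlagFace F d S τ)
    (i j : ℕ) (hi : i ∈ S) (hj : j ∈ S) (hij : i < j)
    (hiτ : ∀ W ∈ τ, Module.finrank F W ≠ i)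
    (hjτ : ∀ W ∈ τ, Module.finrank F W ≠ j)
    (f : Submodule F (Fin d → F) → ℝ)
    (hmean : twoColorExp F d S τ i j f = 0) :
    twoColorPairExp F d S τ i j f f ≤
      (1 / Real.sqrt (Fintype.card F : ℝ)) * twoColorExp F d S τ i j (fun W => (f W) ^ 2) := by
  obtain ⟨r, c, hrow, hcol, hb⟩ := link_structure hτ.1 hij hiτ hjτ
  obtain ⟨n0, hn0⟩ := sum_pairs hτ hi hj hij
  have hone : ∀ k ∈ S, ∀ T ∈ maxFacesAbove F d S τ,
      (∑ W ∈ T.filter (fun W : Submodule F (Fin d → F) => Module.finrank F W = k), (1:ℝ)) = 1 := by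
    intro k hk T hT
    obtain ⟨W, hW⟩ := exists_filter_eq (mem_maxFaces.1 hT).1 hk
    rw [hW, Finset.sum_singleton]
  have hexp : ∀ g : Submodule F (Fin d → F) → ℝ, twoColorExp F d S τ i j g =
      n0 * (∑ U ∈ lk τ i, ∑ W ∈ lk τ j, ic U W * (g U + g W) / 2) /
        ((maxFacesAbove F d S τ).card : ℝ) := by
    intro g
    unfold twoColorExp
    congr 1
    have h1 := hn0 g (fun _ => 1)
    have h2 := hn0 (fun _ => 1) g
    rw [Finset.sum_congr rfl (fun T hT => by rw [hone j hj T hT, mul_one])] at h1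
    rw [Finset.sum_congr rfl (fun T hT => by rw [hone i hi T hT, one_mul])] at h2
    rw [← Finset.sum_div, Finset.sum_add_distrib, h1, h2, ← mul_add, mul_div_assoc]
    congr 1
    rw [← Finset.sum_add_distrib, Finset.sum_div]
    refine Finset.sum_congr rfl fun U _ => ?_
    rw [← Finset.sum_add_distrib, Finset.sum_div]
    exact Finset.sum_congr rfl fun W _ => by ring
  have hpair : twoColorPairExp F d S τ i j f f =
      n0 * (∑ U ∈ lk τ i, ∑ W ∈ lk τ j, ic U W * (f U * f W)) /
        ((maxFacesAbove F d S τ).card : ℝ) := by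
    unfold twoColorPairExp
    rw [hn0]
  rw [hexp] at hmean
  rw [hpair, hexp]
  rcases div_eq_zero_iff.1 hmean with h0 | h0
  · rcases mul_eq_zero.1 h0 with h0 | h0
    · simp [h0]
    · have hq : (0:ℝ) < Fintype.card F := by exact_mod_cast Fintype.card_pos
      have key := final_bound (lk τ i) (lk τ j) ic (Fintype.card F) r c hq
        (Nat.cast_nonneg _) (Nat.cast_nonneg _)
        (fun x _ y _ => by unfold ic; split_ifs <;> norm_num) hrow hcol hb f f (by
          simp only [← Finset.sum_div] at h0
          linarith)
      have h1 : (0:ℝ) ≤ n0 / ((maxFacesAbove F d S τ).card : ℝ) :=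
        div_nonneg (Nat.cast_nonneg _) (Nat.cast_nonneg _)
      have h2 := mul_le_mul_of_nonneg_left key h1
      calc _ = n0 / ((maxFacesAbove F d S τ).card : ℝ) *
            (∑ U ∈ lk τ i, ∑ W ∈ lk τ j, ic U W * (f U * f W)) := by ring
        _ ≤ _ := h2
        _ = _ := by ring
  · simp [h0]

end FlagExp

/-- The projected flags complex `B(d,S,q)` is a `(1/√q)`-product: for any
face `τ` of codimension at least `2` and colors `i ≠ j` in `S` not used by `τ`, the bipartite
graph between the color classes `i` and `j` of the link of `τ` has normalized second
eigenvalue at most `1/√q`, stated in Rayleigh-quotient form. -/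
theorem stmt_2 (q : ℕ) (hq : IsPrimePow q)
    (F : Type) [Field F] [Fintype F] (hF : Fintype.card F = q)
    (d : ℕ) (hd : 3 ≤ d)
    (S : Finset ℕ) (hS : S ⊆ Finset.Icc 1 (d - 1)) (hScard : 2 ≤ S.card)
    (τ : Finset (Submodule F (Fin d → F))) (hτ : IsFlagFace F d S τ)
    (hcodim : τ.card + 2 ≤ S.card)
    (i j : ℕ) (hi : i ∈ S) (hj : j ∈ S) (hij : i ≠ j)
    (hiτ : ∀ W ∈ τ, Module.finrank F W ≠ i)
    (hjτ : ∀ W ∈ τ, Module.finrank F W ≠ j)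
    (f : Submodule F (Fin d → F) → ℝ)
    (hmean : twoColorExp F d S τ i j f = 0) :
    twoColorPairExp F d S τ i j f f ≤
      (1 / Real.sqrt (q : ℝ)) * twoColorExp F d S τ i j (fun W => (f W) ^ 2) := by
  subst hF
  rcases lt_or_gt_of_ne hij with h | h
  · exact FlagExp.main_lt S τ hτ i j hi hj h hiτ hjτ f hmean
  · have e1 : ∀ g, twoColorExp F d S τ i j g = twoColorExp F d S τ j i g := by
      intro g
      unfold twoColorExp
      congr 1
      exact Finset.sum_congr rfl fun T _ => by rw [add_comm]
    have e2 : twoColorPairExp F d S τ i j f f = twoColorPairExp F d S τ j i f f := by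
      unfold twoColorPairExp
      congr 1
      exact Finset.sum_congr rfl fun T _ => by rw [mul_comm]
    rw [e1] at hmean ⊢
    rw [e2]
    exact FlagExp.main_lt S τ hτ j i hj hi h hjτ hiτ f hmean
end

section
/- Let q be a prime power, F a finite field with q elements, d ≥ 3 an integer, S ⊆ {1,…,d−1} with |S| ≥ 2, and let r ≥ 0 satisfy 2r+2 ≤ |S| and √q − 1 − 2(|S|−r) > 0. Let J be a set of m ≥ 2 pairwise disjoint (r+1)-element subsets of S. The colored faces complex F^J(B(d,S,q)) has as vertices the chains s of subspaces of F^d with {dim(U) : U ∈ s} ∈ J, and as faces the sets of such chains with pairwise distinct dimension sets whose union is a chain; its maximal faces have exactly one chain of each dimension set c ∈ J and carry the distribution obtained by sampling a uniformly random maximal face T of B(d,S,q), restricting T to the subspaces with dimension in ∪J, and partitioning the restriction into blocks according to J. Then F^J(B(d,S,q)) is a one-sided local spectral expander with parameter λ′ = 2(r+1)/(√q − 1 − 2(|S|−r)); explicitly, for every face σ of F^J(B(d,S,q)) with |σ| ≤ m−2 the following holds: sample a maximal face of F^J(B(d,S,q)) from its distribution conditioned on containing σ, let (b,b′) be a uniformly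 random ordered pair of distinct blocks of the sampled maximal face not in σ, and let π₀ be a uniformly random single such block; then every f from the vertices of the link of σ to ℝ with E_{π₀}[f] = 0 satisfies E[f(b)·f(b′)] ≤ λ′·E_{π₀}[f²]. -/
open Finset
open scoped Classical

/-- The maximal faces of `B(n,S,q)` whose blocks contain all blocks of `σ`. -/
noncomputable def topsAboveBlocks (F : Type) [Field F] [Fintype F] (n : ℕ) (S : Finset ℕ)
    (σ : Finset (Finset (Submodule F (Fin n → F)))) :
    Finset (Finset (Submodule F (Fin n → F))) :=
  Finset.univ.filter fun T => IsMaxFlagFace F n S T ∧ ∀ s ∈ σ, s ⊆ T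

/-- The block of dimension-set `c` of a maximal face `T`: its subspaces of dimension in `c`. -/
noncomputable def blockOf (F : Type) [Field F] [Fintype F] (n : ℕ)
    (T : Finset (Submodule F (Fin n → F))) (c : Finset ℕ) :
    Finset (Submodule F (Fin n → F)) :=
  T.filter fun W : Submodule F (Fin n → F) => Module.finrank F W ∈ c

/-- The dimension-sets of `J` not used by the blocks of `σ`. -/
noncomputable def remColors (F : Type) [Field F] [Fintype F] (n : ℕ)
    (J : Finset (Finset ℕ)) (σ : Finset (Finset (Submodule F (Fin n → F)))) :
    Finset (Finset ℕ) :=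
  J \ σ.image (fun s => s.image (fun W : Submodule F (Fin n → F) => Module.finrank F W))

/-- `E_{π₀}[f]`: sample a uniformly random maximal face of `B(n,S,q)` whose block-set
contains `σ`, then a uniformly random block of it not in `σ`. -/
noncomputable def facesVertExp (F : Type) [Field F] [Fintype F] (n : ℕ) (S : Finset ℕ)
    (J : Finset (Finset ℕ)) (σ : Finset (Finset (Submodule F (Fin n → F))))
    (f : Finset (Submodule F (Fin n → F)) → ℝ) : ℝ :=
  (∑ T ∈ topsAboveBlocks F n S σ,
      (∑ c ∈ remColors F n J σ, f (blockOf F n T c)) /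
        ((remColors F n J σ).card : ℝ)) /
    ((topsAboveBlocks F n S σ).card : ℝ)

/-- `E[f(b)·g(b′)]`: sample a uniformly random maximal face of `B(n,S,q)` whose block-set
contains `σ`, then a uniformly random ordered pair of distinct blocks of it not in `σ`. -/
noncomputable def facesPairExp (F : Type) [Field F] [Fintype F] (n : ℕ) (S : Finset ℕ)
    (J : Finset (Finset ℕ)) (σ : Finset (Finset (Submodule F (Fin n → F))))
    (f g : Finset (Submodule F (Fin n → F)) → ℝ) : ℝ :=
  (∑ T ∈ topsAboveBlocks F n S σ,
      (∑ c ∈ remColors F n J σ, ∑ c' ∈ (remColors F n J σ).erase c,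
          f (blockOf F n T c) * g (blockOf F n T c')) /
        (((remColors F n J σ).card : ℝ) * (((remColors F n J σ).card : ℝ) - 1))) /
    ((topsAboveBlocks F n S σ).card : ℝ)


/-- Correlation bound between two coordinate sets, relative to every base set. -/
def CorBd {E : Type*} [NormedAddCommGroup E] [InnerProductSpace ℝ E]
    (K : Finset ℕ → Submodule ℝ E) (c c' : Finset ℕ) (ε : ℝ) : Prop :=
  ∀ B : Finset ℕ, ∀ f ∈ K (B ∪ c), f ∈ (K B)ᗮ → ∀ g ∈ K (B ∪ c'), g ∈ (K B)ᗮ →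
    inner ℝ f g ≤ ε * (‖f‖ * ‖g‖)

theorem CorBd.symm {E : Type*} [NormedAddCommGroup E] [InnerProductSpace ℝ E]
    {K : Finset ℕ → Submodule ℝ E} {c c' : Finset ℕ} {ε : ℝ} (h : CorBd K c c' ε) :
    CorBd K c' c ε := by
  intro B f hf hf' g hg hg'
  have := h B g hg hg' f hf hf'
  rw [real_inner_comm, mul_comm ‖f‖]
  exact this

theorem CorBd.insert {E : Type*} [NormedAddCommGroup E] [InnerProductSpace ℝ E]
    [FiniteDimensional ℝ E]
    {K : Finset ℕ → Submodule ℝ E} (hK : Monotone K) {c c' : Finset ℕ} {a : ℕ} {ε₁ ε₂ : ℝ}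
    (hε : 0 ≤ ε₂)
    (h1 : CorBd K c c' ε₁) (h2 : CorBd K {a} c' ε₂) :
    CorBd K (insert a c) c' (Real.sqrt (ε₁ ^ 2 + ε₂ ^ 2)) := by
  intro B f hf hf' g hg hg'
  set P := (K (B ∪ c)).starProjection with hP
  have hBc : K B ≤ K (B ∪ c) := hK Finset.subset_union_left
  have hf1 : P f ∈ K (B ∪ c) := Submodule.starProjection_apply_mem _ _
  have hf2 : f - P f ∈ (K (B ∪ c))ᗮ := Submodule.sub_starProjection_mem_orthogonal f
  have hg1 : P g ∈ K (B ∪ c) := Submodule.starProjection_apply_mem _ _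
  have hg2 : g - P g ∈ (K (B ∪ c))ᗮ := Submodule.sub_starProjection_mem_orthogonal g
  have hf1' : P f ∈ (K B)ᗮ := by
    have : P f = f - (f - P f) := by abel
    rw [this]
    exact Submodule.sub_mem _ hf' (Submodule.orthogonal_le hBc hf2)
  have e1 := h1 B (P f) hf1 hf1' g hg hg'
  have hsub : K (B ∪ c) ≤ K (B ∪ c ∪ {a}) := hK Finset.subset_union_left
  have hfa : f - P f ∈ K (B ∪ c ∪ {a}) := by
    refine Submodule.sub_mem _ (hK ?_ hf) (hsub hf1)
    intro x; simp
  have hga : g - P g ∈ K (B ∪ c ∪ c') := by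
    refine Submodule.sub_mem _ (hK ?_ hg) (hK Finset.subset_union_left hg1)
    intro x; simp; tauto
  have e2 := h2 (B ∪ c) _ hfa hf2 _ hga hg2
  have i0 : inner ℝ (f - P f) (P g) = (0 : ℝ) := Submodule.inner_left_of_mem_orthogonal hg1 hf2
  have i1 : inner ℝ (P f) (f - P f) = (0 : ℝ) := Submodule.inner_right_of_mem_orthogonal hf1 hf2
  have i2 : inner ℝ (P g) (g - P g) = (0 : ℝ) := Submodule.inner_right_of_mem_orthogonal hg1 hg2
  have d : inner ℝ f g = inner ℝ (P f) g + inner ℝ (f - P f) (g - P g) := by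
    rw [inner_sub_right (f - P f), i0, sub_zero, ← inner_add_left]; congr 1; abel
  have nf : ‖f‖ * ‖f‖ = ‖P f‖ * ‖P f‖ + ‖f - P f‖ * ‖f - P f‖ := by
    rw [← norm_add_sq_eq_norm_sq_add_norm_sq_of_inner_eq_zero _ _ i1]; congr 2 <;> abel_nf
  have ng : ‖g‖ * ‖g‖ = ‖P g‖ * ‖P g‖ + ‖g - P g‖ * ‖g - P g‖ := by
    rw [← norm_add_sq_eq_norm_sq_add_norm_sq_of_inner_eq_zero _ _ i2]; congr 2 <;> abel_nf
  have ng' : ‖g - P g‖ ≤ ‖g‖ := by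
    apply le_of_sq_le_sq _ (norm_nonneg _) |> fun h => h
    nlinarith [mul_self_nonneg ‖P g‖]
  have e3 : ε₂ * (‖f - P f‖ * ‖g - P g‖) ≤ ε₂ * (‖f - P f‖ * ‖g‖) := by gcongr
  have e4 : ε₁ * ‖P f‖ + ε₂ * ‖f - P f‖ ≤ Real.sqrt (ε₁ ^ 2 + ε₂ ^ 2) * ‖f‖ := by
    rw [← Real.sqrt_sq (norm_nonneg f), ← Real.sqrt_mul (by positivity)]
    apply Real.le_sqrt_of_sq_le
    rw [pow_two ‖f‖, nf]
    nlinarith [sq_nonneg (ε₁ * ‖f - P f‖ - ε₂ * ‖P f‖)]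
  rw [d]
  calc _ ≤ ε₁ * (‖P f‖ * ‖g‖) + ε₂ * (‖f - P f‖ * ‖g‖) := by linarith
    _ = (ε₁ * ‖P f‖ + ε₂ * ‖f - P f‖) * ‖g‖ := by ring
    _ ≤ (Real.sqrt (ε₁ ^ 2 + ε₂ ^ 2) * ‖f‖) * ‖g‖ := by gcongr
    _ = _ := by ring

theorem CorBd.empty {E : Type*} [NormedAddCommGroup E] [InnerProductSpace ℝ E]
    (K : Finset ℕ → Submodule ℝ E) (c : Finset ℕ) : CorBd K ∅ c 0 := by
  intro B f hf hf' g hg hg'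
  rw [Finset.union_empty] at hf
  rw [Submodule.inner_right_of_mem_orthogonal hf hg']; simp

theorem CorBd.left {E : Type*} [NormedAddCommGroup E] [InnerProductSpace ℝ E]
    [FiniteDimensional ℝ E]
    {K : Finset ℕ → Submodule ℝ E} (hK : Monotone K) {c' : Finset ℕ} {ε : ℝ} (hε : 0 ≤ ε)
    (c : Finset ℕ) (h : ∀ a ∈ c, CorBd K {a} c' ε) :
    CorBd K c c' (Real.sqrt c.card * ε) := by
  induction c using Finset.induction_on with
  | empty => simpa using CorBd.empty K c'
  | insert a c ha ih =>
    have h1 := ih fun b hb => h b (Finset.mem_insert_of_mem hb)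
    have h2 := CorBd.insert hK hε h1 (h a (Finset.mem_insert_self _ _))
    convert h2 using 1
    rw [mul_pow, Real.sq_sqrt (by positivity), Finset.card_insert_of_notMem ha]
    rw [show ((c.card : ℝ) * ε ^ 2 + ε ^ 2) = ((c.card + 1 : ℕ) : ℝ) * ε ^ 2 by push_cast; ring,
      Real.sqrt_mul (by positivity), Real.sqrt_sq hε]

theorem CorBd.both {E : Type*} [NormedAddCommGroup E] [InnerProductSpace ℝ E]
    [FiniteDimensional ℝ E]
    {K : Finset ℕ → Submodule ℝ E} (hK : Monotone K) {ε : ℝ} (hε : 0 ≤ ε)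
    (c c' : Finset ℕ) (h : ∀ a ∈ c, ∀ b ∈ c', CorBd K {a} {b} ε) :
    CorBd K c c' (Real.sqrt c.card * (Real.sqrt c'.card * ε)) :=
  CorBd.left hK (by positivity) c fun a ha =>
    (CorBd.left hK hε c' fun b hb => (h a ha b hb).symm).symm

theorem up_count {F V : Type*} [Field F] [Fintype F] [AddCommGroup V] [Module F V] [Finite V]
    (A U : Submodule F V) (h : A ≤ U) :
    (Nat.card {B : Submodule F V // A ≤ B ∧ B ≤ U ∧
      Module.finrank F B = Module.finrank F A + 1} : ℝ) * ((Fintype.card F : ℝ) - 1)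
      = (Fintype.card F : ℝ) ^ (Module.finrank F U - Module.finrank F A) - 1 := by
  haveI : Fintype V := Fintype.ofFinite V
  haveI : Finite (Submodule F V) := Finite.of_injective (fun W => (W : Set V)) SetLike.coe_injective
  haveI : Fintype (Submodule F V) := Fintype.ofFinite _
  set q := Fintype.card F with hq
  have hcard : ∀ W : Submodule F V, (univ.filter fun v => v ∈ W).card = q ^ Module.finrank F W := by
    intro W
    rw [← Module.card_eq_pow_finrank (K := F) (V := W), Fintype.card_subtype]
  have hdiff : ∀ W : Submodule F V, A ≤ W →
      ((univ.filter fun v => v ∈ W ∧ v ∉ A).card : ℝ)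
        = (q : ℝ) ^ Module.finrank F W - (q : ℝ) ^ Module.finrank F A := by
    intro W hW
    have h1 : (univ.filter fun v => v ∈ W ∧ v ∉ A)
        = (univ.filter fun v => v ∈ W) \ (univ.filter fun v => v ∈ A) := by
      ext v; simp
    rw [h1, Finset.cast_card_sdiff, hcard, hcard]
    · push_cast; ring
    · intro v; simp; exact fun hv => hW hv
  set T := univ.filter fun B : Submodule F V => A ≤ B ∧ B ≤ U ∧
      Module.finrank F B = Module.finrank F A + 1 with hT
  have hdim : ∀ v, v ∉ A → Module.finrank F ↥(A ⊔ F ∙ v) = Module.finrank F A + 1 := by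
    intro v hv
    have hv0 : v ≠ 0 := fun h0 => hv (h0 ▸ A.zero_mem)
    have h2 := Submodule.finrank_sup_add_finrank_inf_eq A (F ∙ v)
    rw [finrank_span_singleton hv0] at h2
    have : A ⊓ (F ∙ v) = ⊥ := by
      rw [← disjoint_iff, Submodule.disjoint_span_singleton' hv0]; exact hv
    rw [this, finrank_bot] at h2
    omega
  have key : ((univ.filter fun v => v ∈ U ∧ v ∉ A).card : ℝ)
      = ∑ B ∈ T, ((univ.filter fun v => v ∈ B ∧ v ∉ A).card : ℝ) := by
    rw [Finset.card_eq_sum_card_fiberwise (f := fun v => A ⊔ F ∙ v) (t := T)]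
    · push_cast
      refine Finset.sum_congr rfl fun B hB => ?_
      congr 2
      rw [hT, mem_filter] at hB
      obtain ⟨-, hAB, hBU, hBd⟩ := hB
      ext v
      simp only [mem_filter, mem_univ, true_and]
      constructor
      · rintro ⟨⟨-, h2⟩, rfl⟩
        exact ⟨Submodule.mem_sup_right (Submodule.mem_span_singleton_self v), h2⟩
      · rintro ⟨h1, h2⟩
        refine ⟨⟨hBU h1, h2⟩, ?_⟩
        apply Submodule.eq_of_le_of_finrank_eq
        · exact sup_le hAB (by rwa [Submodule.span_singleton_le_iff_mem])
        · rw [hdim v h2, hBd]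
    · intro v hv
      simp only [coe_filter, mem_univ, true_and, Set.mem_setOf_eq] at hv
      simp only [hT, coe_filter, mem_univ, true_and, Set.mem_setOf_eq]
      exact ⟨le_sup_left, sup_le h (by rw [Submodule.span_singleton_le_iff_mem]; exact hv.1),
        hdim v hv.2⟩
  rw [hdiff U h, Finset.sum_congr rfl (g := fun _ => (q : ℝ) ^ (Module.finrank F A + 1)
    - (q : ℝ) ^ Module.finrank F A)] at key
  · rw [Finset.sum_const, nsmul_eq_mul] at key
    rw [Nat.card_eq_fintype_card, Fintype.card_subtype]
    have hle := Submodule.finrank_mono h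
    have hq0 : (0 : ℝ) < (q : ℝ) ^ Module.finrank F A := by
      have : 0 < q := Fintype.card_pos
      positivity
    apply mul_left_cancel₀ hq0.ne'
    rw [mul_sub ((q : ℝ) ^ Module.finrank F A) (_ ^ _), ← pow_add, Nat.add_sub_cancel' hle, mul_one, key]
    ring
  · intro B hB
    rw [hT, mem_filter] at hB
    rw [hdiff B hB.2.1, hB.2.2.2]

theorem down_count {F V : Type*} [Field F] [Fintype F] [AddCommGroup V] [Module F V] [Finite V]
    (L A : Submodule F V) (h : L ≤ A) :
    (Nat.card {B : Submodule F V // L ≤ B ∧ B ≤ A ∧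
      Module.finrank F B + 1 = Module.finrank F A} : ℝ) * ((Fintype.card F : ℝ) - 1)
      = (Fintype.card F : ℝ) ^ (Module.finrank F A - Module.finrank F L) - 1 := by
  haveI : Finite (Module.Dual F V) := Finite.of_injective (fun φ => (φ : V → F)) DFunLike.coe_injective
  have h1 := up_count (F := F) (V := Module.Dual F V) A.dualAnnihilator L.dualAnnihilator
    (Submodule.dualAnnihilator_anti h)
  have fA : Module.finrank F A + Module.finrank F A.dualAnnihilator = Module.finrank F V :=
    Subspace.finrank_add_finrank_dualAnnihilator_eq A
  have fL : Module.finrank F L + Module.finrank F L.dualAnnihilator = Module.finrank F V :=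
    Subspace.finrank_add_finrank_dualAnnihilator_eq L
  have hle := Submodule.finrank_mono h
  rw [show Module.finrank F L.dualAnnihilator - Module.finrank F A.dualAnnihilator
    = Module.finrank F A - Module.finrank F L by omega] at h1
  rw [← h1]
  congr 2
  apply Nat.card_congr
  refine Equiv.subtypeEquiv
    ((Subspace.orderIsoFiniteDimensional (K := F) (V := V)).toEquiv.trans OrderDual.ofDual) ?_
  intro B
  have fB : Module.finrank F B + Module.finrank F B.dualAnnihilator = Module.finrank F V :=
    Subspace.finrank_add_finrank_dualAnnihilator_eq B
  have hBe : ((Subspace.orderIsoFiniteDimensional (K := F) (V := V)).toEquiv.trans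
    OrderDual.ofDual) B = B.dualAnnihilator := rfl
  rw [hBe]
  have e1 : ∀ P Q : Submodule F V, P ≤ Q ↔ Q.dualAnnihilator ≤ P.dualAnnihilator := fun P Q =>
    (Subspace.dualAnnihilator_le_dualAnnihilator_iff).symm
  rw [e1 L B, e1 B A]
  constructor
  · rintro ⟨a, b, c⟩; exact ⟨b, a, by omega⟩
  · rintro ⟨a, b, c⟩; exact ⟨b, a, by omega⟩

/-- The `k`-dimensional subspaces between `L` and `U`. -/
noncomputable def Gr {F : Type} [Field F] [Fintype F] {n : ℕ}
    (L U : Submodule F (Fin n → F)) (k : ℕ) : Finset (Submodule F (Fin n → F)) :=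
  univ.filter fun A => L ≤ A ∧ A ≤ U ∧ Module.finrank F A = k

/-- Gaussian integer `[n]_q`. -/
noncomputable def qn (F : Type) [Fintype F] (n : ℕ) : ℝ :=
  ((Fintype.card F : ℝ) ^ n - 1) / ((Fintype.card F : ℝ) - 1)

theorem one_lt_q (F : Type) [Field F] [Fintype F] : (1 : ℝ) < Fintype.card F := by
  exact_mod_cast Fintype.one_lt_card

theorem qn_nonneg (F : Type) [Field F] [Fintype F] (n : ℕ) : 0 ≤ qn F n := by
  have := one_lt_q F
  have h := one_le_pow₀ this.le (n := n)
  unfold qn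
  apply div_nonneg <;> linarith

theorem q_mul_qn (F : Type) [Field F] [Fintype F] (n : ℕ) :
    (Fintype.card F : ℝ) * qn F n ≤ qn F (n + 1) := by
  have := one_lt_q F
  unfold qn
  rw [mul_div_assoc']
  apply div_le_div_of_nonneg_right _ (by linarith)
  rw [pow_succ]; linarith

theorem Gr_up {F : Type} [Field F] [Fintype F] {n : ℕ}
    (L U : Submodule F (Fin n → F)) (k : ℕ) (A : Submodule F (Fin n → F)) (hA : A ∈ Gr L U k) :
    (((Gr L U (k + 1)).filter fun B => A ≤ B).card : ℝ) = qn F (Module.finrank F U - k) := by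
  have hq := one_lt_q F
  simp only [Gr, mem_filter, mem_univ, true_and] at hA
  obtain ⟨hL, hU, rfl⟩ := hA
  have := up_count A U hU
  unfold qn
  rw [eq_div_iff (by linarith), ← this]
  congr 2
  rw [Nat.card_eq_fintype_card, Fintype.card_subtype]
  congr 1
  ext B
  simp only [Gr, mem_filter, mem_univ, true_and]
  constructor
  · rintro ⟨⟨a, b, c⟩, e⟩; exact ⟨e, b, c⟩
  · rintro ⟨e, b, c⟩; exact ⟨⟨hL.trans e, b, c⟩, e⟩

theorem Gr_down {F : Type} [Field F] [Fintype F] {n : ℕ}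
    (L U : Submodule F (Fin n → F)) (k : ℕ) (A : Submodule F (Fin n → F))
    (hA : A ∈ Gr L U (k + 1)) :
    (((Gr L U k).filter fun B => B ≤ A).card : ℝ) = qn F (k + 1 - Module.finrank F L) := by
  have hq := one_lt_q F
  simp only [Gr, mem_filter, mem_univ, true_and] at hA
  obtain ⟨hL, hU, hk⟩ := hA
  have := down_count L A hL
  unfold qn
  rw [eq_div_iff (by linarith), ← hk, ← this]
  congr 2
  rw [Nat.card_eq_fintype_card, Fintype.card_subtype]
  congr 1
  ext B
  simp only [Gr, mem_filter, mem_univ, true_and]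
  constructor
  · rintro ⟨⟨a, b, c⟩, e⟩; exact ⟨a, e, by omega⟩
  · rintro ⟨a, e, c⟩; exact ⟨⟨a, e.trans hU, by omega⟩, e⟩

theorem card_up_eq_card_down {F : Type} [Field F] [Fintype F] {n : ℕ}
    (L U : Submodule F (Fin n → F)) (k : ℕ) (A A' : Submodule F (Fin n → F))
    (hA : A ∈ Gr L U (k + 1)) (hA' : A' ∈ Gr L U (k + 1)) (hne : A ≠ A') :
    ((Gr L U (k + 2)).filter fun B => A ≤ B ∧ A' ≤ B).card
      = ((Gr L U k).filter fun C => C ≤ A ∧ C ≤ A').card := by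
  simp only [Gr, mem_filter, mem_univ, true_and] at hA hA'
  obtain ⟨hL, hU, hk⟩ := hA
  obtain ⟨hL', hU', hk'⟩ := hA'
  have hdim := Submodule.finrank_sup_add_finrank_inf_eq A A'
  have hlt : A < A ⊔ A' := by
    refine lt_of_le_of_ne le_sup_left fun h => hne ?_
    have : A' ≤ A := by rw [h]; exact le_sup_right
    exact (Submodule.eq_of_le_of_finrank_eq this (by omega)).symm
  have hlt' := Submodule.finrank_lt_finrank_of_lt hlt
  by_cases hc : Module.finrank F ↥(A ⊓ A') = k
  · have h1 : ((Gr L U (k + 2)).filter fun B => A ≤ B ∧ A' ≤ B) = {A ⊔ A'} := by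
      ext B
      simp only [Gr, mem_filter, mem_univ, true_and, mem_singleton]
      constructor
      · rintro ⟨⟨a, b, c⟩, e, e'⟩
        exact (Submodule.eq_of_le_of_finrank_eq (sup_le e e') (by omega)).symm
      · rintro rfl
        exact ⟨⟨hL.trans le_sup_left, sup_le hU hU', by omega⟩, le_sup_left, le_sup_right⟩
    have h2 : ((Gr L U k).filter fun C => C ≤ A ∧ C ≤ A') = {A ⊓ A'} := by
      ext B
      simp only [Gr, mem_filter, mem_univ, true_and, mem_singleton]
      constructor
      · rintro ⟨⟨a, b, c⟩, e, e'⟩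
        exact (Submodule.eq_of_le_of_finrank_eq (le_inf e e') (by omega))
      · rintro rfl
        exact ⟨⟨le_inf hL hL', inf_le_left.trans hU, by omega⟩, inf_le_left, inf_le_right⟩
    rw [h1, h2]; simp
  · have h1 : ((Gr L U (k + 2)).filter fun B => A ≤ B ∧ A' ≤ B) = ∅ := by
      ext B
      simp only [Gr, mem_filter, mem_univ, true_and, notMem_empty, iff_false]
      rintro ⟨⟨a, b, c⟩, e, e'⟩
      have := Submodule.finrank_mono (sup_le e e')
      omega
    have h2 : ((Gr L U k).filter fun C => C ≤ A ∧ C ≤ A') = ∅ := by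
      ext B
      simp only [Gr, mem_filter, mem_univ, true_and, notMem_empty, iff_false]
      rintro ⟨⟨a, b, c⟩, e, e'⟩
      have := Submodule.finrank_mono (le_inf e e')
      omega
    rw [h1, h2]

theorem sum_sq_expand {α β : Type*} (s : Finset α) (t : Finset β) (R : α → β → Prop) (f : α → ℝ) :
    ∑ b ∈ t, (∑ a ∈ s.filter (fun a => R a b), f a) ^ 2
      = ∑ a ∈ s, ∑ a' ∈ s, f a * f a' * ((t.filter fun b => R a b ∧ R a' b).card : ℝ) := by
  have : ∀ b, (∑ a ∈ s.filter (fun a => R a b), f a) ^ 2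
      = ∑ a ∈ s, ∑ a' ∈ s, f a * f a' * (if R a b ∧ R a' b then 1 else 0) := by
    intro b
    rw [sum_filter, pow_two, sum_mul_sum]
    refine sum_congr rfl fun a _ => sum_congr rfl fun a' _ => ?_
    by_cases h1 : R a b <;> by_cases h2 : R a' b <;> simp [h1, h2]
  simp_rw [this]
  rw [sum_comm]
  refine sum_congr rfl fun a _ => ?_
  rw [sum_comm]
  refine sum_congr rfl fun a' _ => ?_
  rw [← mul_sum, Finset.sum_boole]

theorem bip_comm {α β : Type*} (s : Finset α) (t : Finset β) (R : α → β → Prop)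
    (f : α → ℝ) (g : β → ℝ) :
    ∑ b ∈ t, (∑ a ∈ s.filter (fun a => R a b), f a) * g b
      = ∑ a ∈ s, f a * ∑ b ∈ t.filter (fun b => R a b), g b := by
  simp_rw [sum_filter, sum_mul, mul_sum]
  rw [sum_comm]
  refine sum_congr rfl fun a _ => sum_congr rfl fun b _ => ?_
  split_ifs <;> simp

theorem adj_bound {α β : Type*} (s : Finset α) (t : Finset β) (R : α → β → Prop) (C : ℝ)
    (hC : 0 ≤ C)
    (g : β → ℝ)
    (h : ∑ b ∈ t, (∑ a ∈ s.filter (fun a => R a b), (∑ b' ∈ t.filter (fun b => R a b), g b')) ^ 2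
      ≤ C * ∑ a ∈ s, (∑ b' ∈ t.filter (fun b => R a b), g b') ^ 2) :
    ∑ a ∈ s, (∑ b' ∈ t.filter (fun b => R a b), g b') ^ 2 ≤ C * ∑ b ∈ t, g b ^ 2 := by
  set f : α → ℝ := fun a => ∑ b' ∈ t.filter (fun b => R a b), g b' with hf
  have e1 : ∑ a ∈ s, f a ^ 2 = ∑ b ∈ t, (∑ a ∈ s.filter (fun a => R a b), f a) * g b := by
    rw [bip_comm]; refine sum_congr rfl fun a _ => by rw [pow_two]
  have e2 := Finset.sum_mul_sq_le_sq_mul_sq t (fun b => ∑ a ∈ s.filter (fun a => R a b), f a) g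
  rw [← e1] at e2
  have p1 : 0 ≤ ∑ a ∈ s, f a ^ 2 := sum_nonneg fun _ _ => sq_nonneg _
  have p2 : 0 ≤ ∑ b ∈ t, g b ^ 2 := sum_nonneg fun _ _ => sq_nonneg _
  have h' : (∑ a ∈ s, f a ^ 2) ^ 2 ≤ (C * ∑ a ∈ s, f a ^ 2) * ∑ b ∈ t, g b ^ 2 :=
    e2.trans (mul_le_mul_of_nonneg_right h p2)
  rcases p1.eq_or_lt with h0 | h0
  · rw [← h0]; positivity
  · nlinarith

theorem qn_step (F : Type) [Field F] [Fintype F] (i j : ℕ) :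
    (Fintype.card F : ℝ) * qn F i * qn F (j + 1) + (qn F (j + 1) - qn F (i + 1))
      = (Fintype.card F : ℝ) * qn F (i + 1) * qn F j := by
  have := one_lt_q F
  have h0 : (Fintype.card F : ℝ) - 1 ≠ 0 := by linarith
  unfold qn
  field_simp
  ring

theorem Gr_spectral {F : Type} [Field F] [Fintype F] {n : ℕ}
    (L U : Submodule F (Fin n → F)) (k : ℕ) (hk : Module.finrank F L ≤ k) :
    k < Module.finrank F U → ∀ f : Submodule F (Fin n → F) → ℝ, ∑ A ∈ Gr L U k, f A = 0 →
      ∑ B ∈ Gr L U (k + 1), (∑ A ∈ (Gr L U k).filter (fun A => A ≤ B), f A) ^ 2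
        ≤ ((Fintype.card F : ℝ) * qn F (k - Module.finrank F L) *
            qn F (Module.finrank F U - (k + 1))) * ∑ A ∈ Gr L U k, f A ^ 2 := by
  induction k, hk using Nat.le_induction with
  | base =>
    intro hU f hf
    have hsub : ∀ A ∈ Gr L U (Module.finrank F L), f A = 0 := by
      intro A hA
      have hall : ∀ A' ∈ Gr L U (Module.finrank F L), A' = L := by
        intro A' hA'
        simp only [Gr, mem_filter, mem_univ, true_and] at hA'
        exact (Submodule.eq_of_le_of_finrank_eq hA'.1 hA'.2.2.symm).symm
      have hs : Gr L U (Module.finrank F L) = {L} := by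
        ext A'
        rw [mem_singleton]
        refine ⟨hall A', ?_⟩
        rintro rfl
        rw [← hall A hA]; rw [hall A hA]; rw [hall A hA] at hA; exact hA
      rw [hs, sum_singleton] at hf
      rw [hall A hA, hf]
    have : ∑ B ∈ Gr L U (Module.finrank F L + 1),
        (∑ A ∈ (Gr L U (Module.finrank F L)).filter (fun A => A ≤ B), f A) ^ 2 = 0 := by
      refine sum_eq_zero fun B _ => ?_
      rw [sum_eq_zero fun A hA => hsub A (mem_filter.1 hA).1]; simp
    rw [this]
    have h1 := qn_nonneg F (Module.finrank F L - Module.finrank F L)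
    have h2 := qn_nonneg F (Module.finrank F U - (Module.finrank F L + 1))
    have h3 : 0 ≤ ∑ A ∈ Gr L U (Module.finrank F L), f A ^ 2 := sum_nonneg fun _ _ => sq_nonneg _
    positivity
  | succ k hk ih =>
    intro hU f hf
    obtain ⟨i, rfl⟩ := Nat.exists_eq_add_of_le hk
    obtain ⟨j, hj⟩ := Nat.exists_eq_add_of_lt hU
    set l := Module.finrank F L with hl
    have ih' := ih (by omega) (fun C => ∑ A ∈ (Gr L U (l + i + 1)).filter (fun A => C ≤ A), f A) (by
      have := bip_comm (Gr L U (l + i)) (Gr L U (l + i + 1)) (fun C A => C ≤ A) (fun _ => 1) f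
      simp only [one_mul] at this
      rw [← this]
      rw [sum_congr rfl (g := fun A => qn F (l + i + 1 - l) * f A), ← mul_sum, hf, mul_zero]
      intro A hA
      rw [sum_const, nsmul_one, Gr_down L U (l + i) A hA])
    have hc : 0 ≤ (Fintype.card F : ℝ) * qn F (l + i - l) *
        qn F (Module.finrank F U - (l + i + 1)) := by
      have h1 := qn_nonneg F (l + i - l)
      have h2 := qn_nonneg F (Module.finrank F U - (l + i + 1))
      positivity
    have dn := adj_bound (Gr L U (l + i)) (Gr L U (l + i + 1)) (fun C A => C ≤ A) _ hc f ih'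
    have ex1 := sum_sq_expand (Gr L U (l + i + 1)) (Gr L U (l + i + 1 + 1)) (fun A B => A ≤ B) f
    have ex2 := sum_sq_expand (Gr L U (l + i + 1)) (Gr L U (l + i)) (fun A C => C ≤ A) f
    have hd : ∑ B ∈ Gr L U (l + i + 1 + 1),
          (∑ A ∈ (Gr L U (l + i + 1)).filter (fun A => A ≤ B), f A) ^ 2
        = ∑ C ∈ Gr L U (l + i), (∑ A ∈ (Gr L U (l + i + 1)).filter (fun A => C ≤ A), f A) ^ 2
          + (qn F (j + 1) - qn F (i + 1)) * ∑ A ∈ Gr L U (l + i + 1), f A ^ 2 := by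
      rw [ex1, ex2, mul_sum, ← sum_add_distrib]
      refine sum_congr rfl fun A hA => ?_
      rw [← sub_eq_iff_eq_add', ← sum_sub_distrib]
      rw [sum_eq_single A]
      · simp only [and_self]
        rw [Gr_up L U (l + i + 1) A hA, Gr_down L U (l + i) A hA]
        rw [show Module.finrank F U - (l + i + 1) = j + 1 by omega,
          show l + i + 1 - l = i + 1 by omega]
        ring
      · intro A' hA' hne
        rw [card_up_eq_card_down L U (l + i) A A' hA hA' hne.symm]; ring
      · exact fun h => absurd hA h
    rw [hd]
    have := qn_step F i j
    rw [show l + i + 1 - l = i + 1 by omega,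
      show Module.finrank F U - (l + i + 1 + 1) = j by omega, ← this]
    rw [show l + i - l = i by omega,
      show Module.finrank F U - (l + i + 1) = j + 1 by omega] at dn
    linarith

/-- Bilinear form of the Grassmann expansion between adjacent dimensions. -/
theorem Gr_bilin {F : Type} [Field F] [Fintype F] {n : ℕ}
    (L U : Submodule F (Fin n → F)) (k : ℕ) (hk : Module.finrank F L < k)
    (hk' : k + 1 < Module.finrank F U) (f g : Submodule F (Fin n → F) → ℝ)
    (hf : ∑ A ∈ Gr L U k, f A = 0) :
    (∑ A ∈ Gr L U k, ∑ B ∈ (Gr L U (k + 1)).filter (fun B => A ≤ B), f A * g B) ^ 2 ≤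
      1 / (Fintype.card F : ℝ) *
      ((∑ A ∈ Gr L U k, ∑ B ∈ (Gr L U (k + 1)).filter (fun B => A ≤ B), f A ^ 2) *
       (∑ A ∈ Gr L U k, ∑ B ∈ (Gr L U (k + 1)).filter (fun B => A ≤ B), g B ^ 2)) := by
  have h1 := Gr_spectral L U k hk.le (by omega) f hf
  have e1 : ∑ A ∈ Gr L U k, ∑ B ∈ (Gr L U (k + 1)).filter (fun B => A ≤ B), f A * g B
      = ∑ B ∈ Gr L U (k + 1), (∑ A ∈ (Gr L U k).filter (fun A => A ≤ B), f A) * g B := by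
    rw [bip_comm]; exact sum_congr rfl fun A _ => by rw [mul_sum]
  have e2 : ∑ A ∈ Gr L U k, ∑ B ∈ (Gr L U (k + 1)).filter (fun B => A ≤ B), f A ^ 2
      = qn F (Module.finrank F U - k) * ∑ A ∈ Gr L U k, f A ^ 2 := by
    rw [mul_sum]
    refine sum_congr rfl fun A hA => ?_
    rw [sum_const, nsmul_eq_mul, Gr_up L U k A hA]
  have e3 : ∑ A ∈ Gr L U k, ∑ B ∈ (Gr L U (k + 1)).filter (fun B => A ≤ B), g B ^ 2
      = qn F (k + 1 - Module.finrank F L) * ∑ B ∈ Gr L U (k + 1), g B ^ 2 := by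
    have := bip_comm (Gr L U k) (Gr L U (k + 1)) (fun A B => A ≤ B) (fun _ => 1) (fun B => g B ^ 2)
    simp only [one_mul] at this
    rw [← this, mul_sum]
    refine sum_congr rfl fun A hA => ?_
    rw [sum_const, nsmul_one, Gr_down L U k A hA]
  have cs := Finset.sum_mul_sq_le_sq_mul_sq (Gr L U (k + 1))
    (fun B => ∑ A ∈ (Gr L U k).filter (fun A => A ≤ B), f A) g
  rw [e1, e2, e3]
  refine cs.trans ?_
  set a := Module.finrank F U - (k + 1) with ha
  set b := k - Module.finrank F L with hb
  rw [show Module.finrank F U - k = a + 1 by omega, show k + 1 - Module.finrank F L = b + 1 by omega]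
  have p1 : 0 ≤ ∑ A ∈ Gr L U k, f A ^ 2 := sum_nonneg fun _ _ => sq_nonneg _
  have p2 : 0 ≤ ∑ b ∈ Gr L U (k + 1), g b ^ 2 := sum_nonneg fun _ _ => sq_nonneg _
  have hq := one_lt_q F
  have ca := q_mul_qn F a
  have cb := q_mul_qn F b
  have na := qn_nonneg F a
  have nb := qn_nonneg F b
  have cab : (Fintype.card F : ℝ) * qn F b * qn F a
      ≤ 1 / (Fintype.card F : ℝ) * (qn F (a + 1) * qn F (b + 1)) := by
    rw [one_div, ← div_eq_inv_mul, le_div_iff₀ (by linarith)]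
    calc _ = ((Fintype.card F : ℝ) * qn F a) * ((Fintype.card F : ℝ) * qn F b) := by ring
      _ ≤ _ := mul_le_mul ca cb (by positivity) (qn_nonneg _ _)
  calc _ ≤ (((Fintype.card F : ℝ) * qn F b * qn F a) * ∑ A ∈ Gr L U k, f A ^ 2) *
        ∑ b ∈ Gr L U (k + 1), g b ^ 2 := mul_le_mul_of_nonneg_right h1 p2
    _ ≤ ((1 / (Fintype.card F : ℝ) * (qn F (a + 1) * qn F (b + 1))) * ∑ A ∈ Gr L U k, f A ^ 2) *
        ∑ b ∈ Gr L U (k + 1), g b ^ 2 := by gcongr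
    _ = _ := by ring

/-- Ordered bases of `F^d`. -/
abbrev OBase (F : Type) [Field F] [Fintype F] (d : ℕ) : Type :=
  {v : Fin d → (Fin d → F) // LinearIndependent F v}

/-- The span of the first `t` vectors. -/
def fspan {F : Type} [Field F] [Fintype F] {d : ℕ} (t : ℕ) (v : OBase F d) :
    Submodule F (Fin d → F) :=
  Submodule.span F (v.1 '' {i | i.val < t})

theorem fspan_mono {F : Type} [Field F] [Fintype F] {d : ℕ} {s t : ℕ} (h : s ≤ t)
    (v : OBase F d) : fspan s v ≤ fspan t v :=
  Submodule.span_mono (Set.image_mono fun _ hi => lt_of_lt_of_le hi h)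

theorem fspan_zero {F : Type} [Field F] [Fintype F] {d : ℕ} (v : OBase F d) :
    fspan 0 v = ⊥ := by simp [fspan]

theorem fspan_top {F : Type} [Field F] [Fintype F] {d : ℕ} (v : OBase F d) (t : ℕ) (h : d ≤ t) :
    fspan t v = ⊤ := by
  have h1 : {i : Fin d | i.val < t} = Set.univ := by
    ext i; simp; omega
  rw [fspan, h1, Set.image_univ]
  exact v.2.span_eq_top_of_card_eq_finrank' (by simp)

theorem finrank_fspan {F : Type} [Field F] [Fintype F] {d : ℕ} (v : OBase F d) (t : ℕ)
    (h : t ≤ d) : Module.finrank F (fspan t v) = t := by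
  have h1 : LinearIndependent F (fun i : {i : Fin d // i.val < t} => v.1 i.1) :=
    v.2.comp _ Subtype.val_injective
  have h2 := finrank_span_eq_card h1
  have h3 : Set.range (fun i : {i : Fin d // i.val < t} => v.1 i.1) = v.1 '' {i | i.val < t} := by
    ext x; simp
  rw [h3] at h2
  rw [fspan, h2, Fintype.card_subtype]
  rw [Fin.card_filter_val_lt, min_eq_right h]

theorem fspan_finrank_eq {F : Type} [Field F] [Fintype F] {d : ℕ} (v : OBase F d) (t : ℕ) :
    Module.finrank F (fspan t v) = min t d := by
  rcases le_total t d with h | h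
  · rw [finrank_fspan v t h, min_eq_left h]
  · rw [fspan_top v t h, min_eq_right h, finrank_top]; simp

/-- Fibers of the coordinate maps have constant size. -/
theorem fiber_card_le {F : Type} [Field F] [Fintype F] {d : ℕ} (B : Finset ℕ) (v w : OBase F d) :
    (univ.filter fun u : OBase F d => ∀ t ∈ B, fspan t u = fspan t v).card
      ≤ (univ.filter fun u : OBase F d => ∀ t ∈ B, fspan t u = fspan t w).card := by
  have hc : Fintype.card (Fin d) = Module.finrank F (Fin d → F) := by simp
  let bv := Module.Basis.mk v.2 (v.2.span_eq_top_of_card_eq_finrank' hc).ge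
  let bw := Module.Basis.mk w.2 (w.2.span_eq_top_of_card_eq_finrank' hc).ge
  let e := bv.equiv bw (Equiv.refl _)
  have he : ∀ i, e (v.1 i) = w.1 i := by
    intro i
    have h1 : bv i = v.1 i := by simp [bv]
    have h2 : bw i = w.1 i := by simp [bw]
    rw [← h1, ← h2]; simp [e]
  have hev : ∀ t, (fspan t v).map (e : (Fin d → F) →ₗ[F] (Fin d → F)) = fspan t w := by
    intro t
    rw [fspan, Submodule.map_span, fspan]
    congr 1
    ext x; simp [he]
  refine Finset.card_le_card_of_injOn
    (fun u => ⟨fun i => e (u.1 i), u.2.map' (e : (Fin d → F) →ₗ[F] (Fin d → F)) e.ker⟩) ?_ ?_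
  · intro u hu
    simp only [coe_filter, mem_univ, true_and] at hu ⊢
    intro t ht
    have := hu t ht
    rw [← hev t, ← this]
    rw [fspan, fspan, Submodule.map_span]
    congr 1
    ext x; simp
  · intro u _ u' _ h
    have h' := congrArg Subtype.val h
    apply Subtype.ext
    funext i
    exact e.injective (congrFun h' i)

theorem fiber_card {F : Type} [Field F] [Fintype F] {d : ℕ} (B : Finset ℕ) (v w : OBase F d) :
    (univ.filter fun u : OBase F d => ∀ t ∈ B, fspan t u = fspan t v).card
      = (univ.filter fun u : OBase F d => ∀ t ∈ B, fspan t u = fspan t w).card :=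
  le_antisymm (fiber_card_le B v w) (fiber_card_le B w v)

/-- First `s` vectors from `v`, the others from `w`. -/
noncomputable def glue {F : Type} [Field F] [Fintype F] {d : ℕ} (s : ℕ) (v w : OBase F d) :
    OBase F d :=
  if h : LinearIndependent F (fun i : Fin d => if i.val < s then v.1 i else w.1 i) then ⟨_, h⟩
  else v

theorem glue_aux {F : Type} [Field F] [Fintype F] {d : ℕ} (s : ℕ) (v w : OBase F d)
    (h : fspan s v = fspan s w) (t : ℕ) (ht : s ≤ t) :
    Submodule.span F ((fun i : Fin d => if i.val < s then v.1 i else w.1 i) '' {i | i.val < t})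
      = fspan t w := by
  have hs : ∀ u : Fin d → (Fin d → F), u '' {i | i.val < t}
      = u '' {i | i.val < s} ∪ u '' {i | s ≤ i.val ∧ i.val < t} := by
    intro u
    rw [← Set.image_union]
    congr 1
    ext i; simp; omega
  rw [fspan, hs, hs w.1, Submodule.span_union, Submodule.span_union]
  change _ = fspan s w ⊔ _
  rw [← h, fspan]
  congr 2
  · apply Set.image_congr
    intro i hi
    exact if_pos hi
  · apply Set.image_congr
    intro i hi
    exact if_neg (not_lt.2 hi.1)

theorem glue_li {F : Type} [Field F] [Fintype F] {d : ℕ} (s : ℕ) (v w : OBase F d)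
    (h : fspan s v = fspan s w) :
    LinearIndependent F (fun i : Fin d => if i.val < s then v.1 i else w.1 i) := by
  apply linearIndependent_of_top_le_span_of_card_eq_finrank
  · have := glue_aux s v w h (max s d) (le_max_left _ _)
    rw [fspan_top w _ (le_max_right _ _)] at this
    rw [← this]
    exact Submodule.span_mono (Set.image_subset_range _ _)
  · simp

theorem glue_val {F : Type} [Field F] [Fintype F] {d : ℕ} (s : ℕ) (v w : OBase F d)
    (h : fspan s v = fspan s w) :
    (glue s v w).1 = fun i : Fin d => if i.val < s then v.1 i else w.1 i := by
  rw [glue, dif_pos (glue_li s v w h)]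

theorem glue_ge {F : Type} [Field F] [Fintype F] {d : ℕ} (s : ℕ) (v w : OBase F d)
    (h : fspan s v = fspan s w) (t : ℕ) (ht : s ≤ t) : fspan t (glue s v w) = fspan t w := by
  rw [fspan, glue_val s v w h, glue_aux s v w h t ht]

theorem glue_le {F : Type} [Field F] [Fintype F] {d : ℕ} (s : ℕ) (v w : OBase F d)
    (h : fspan s v = fspan s w) (t : ℕ) (ht : t ≤ s) : fspan t (glue s v w) = fspan t v := by
  rw [fspan, glue_val s v w h, fspan]
  congr 1
  apply Set.image_congr
  intro i hi
  exact if_pos (lt_of_lt_of_le hi ht)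

theorem glue_glue {F : Type} [Field F] [Fintype F] {d : ℕ} (s : ℕ) (v w : OBase F d)
    (h : fspan s v = fspan s w) : glue s (glue s v w) (glue s w v) = v := by
  apply Subtype.ext
  rw [glue_val s _ _ (by rw [glue_ge s v w h s le_rfl, glue_ge s w v h.symm s le_rfl, h]),
    glue_val s v w h, glue_val s w v h.symm]
  funext i
  by_cases hi : i.val < s <;> simp [hi]

theorem realize {F : Type} [Field F] [Fintype F] {d : ℕ} (B : Finset ℕ)
    (x : ℕ → Submodule F (Fin d → F)) (hB : ∀ t ∈ B, t ≤ d)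
    (hx : ∀ t ∈ B, Module.finrank F (x t) = t)
    (hmono : ∀ s ∈ B, ∀ t ∈ B, s ≤ t → x s ≤ x t) :
    ∃ v : OBase F d, ∀ t ∈ B, fspan t v = x t := by
  have key : ∀ k ≤ d, ∃ v : ℕ → (Fin d → F),
      Module.finrank F (Submodule.span F (v '' Set.Iio k)) = k ∧
      (∀ t ∈ B, t ≤ k → Submodule.span F (v '' Set.Iio t) = x t) ∧
      (∀ t ∈ B, k ≤ t → Submodule.span F (v '' Set.Iio k) ≤ x t) := by
    intro k
    induction k with
    | zero =>
      intro _
      refine ⟨fun _ => 0, by simp, ?_, ?_⟩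
      · intro t ht ht0
        obtain rfl : t = 0 := by omega
        have := hx 0 ht
        rw [Submodule.finrank_eq_zero] at this
        rw [this]; simp
      · intro t _ _; simp
    | succ k ih =>
      intro hk
      obtain ⟨v, h1, h2, h3⟩ := ih (by omega)
      obtain ⟨W, hW1, hW2, hW3⟩ : ∃ W : Submodule F (Fin d → F),
          Submodule.span F (v '' Set.Iio k) ≤ W ∧ k < Module.finrank F W ∧
          ∀ t ∈ B, k + 1 ≤ t → W ≤ x t := by
        by_cases hne : (B.filter fun t => k + 1 ≤ t).Nonempty
        · have hm := Finset.min'_mem _ hne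
          rw [mem_filter] at hm
          refine ⟨x ((B.filter fun t => k + 1 ≤ t).min' hne), h3 _ hm.1 (by omega), ?_, ?_⟩
          · rw [hx _ hm.1]; omega
          · intro t ht htk
            exact hmono _ hm.1 _ ht (Finset.min'_le _ _ (mem_filter.2 ⟨ht, htk⟩))
        · refine ⟨⊤, le_top, by rw [finrank_top]; simpa using hk, ?_⟩
          intro t ht htk
          exact absurd ⟨t, mem_filter.2 ⟨ht, htk⟩⟩ hne
      obtain ⟨w, hwW, hw⟩ : ∃ w ∈ W, w ∉ Submodule.span F (v '' Set.Iio k) := by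
        by_contra hcon
        push Not at hcon
        have := Submodule.finrank_mono (show W ≤ Submodule.span F (v '' Set.Iio k) from hcon)
        omega
      have hup : ∀ t ≤ k, Function.update v k w '' Set.Iio t = v '' Set.Iio t := by
        intro t ht
        apply Set.image_congr
        intro i hi
        exact Function.update_of_ne (by have : i < t := hi; omega) _ _
      have hnew : Submodule.span F (Function.update v k w '' Set.Iio (k + 1))
          = Submodule.span F (v '' Set.Iio k) ⊔ Submodule.span F {w} := by
        have : Set.Iio (k + 1) = Set.Iio k ∪ {k} := by ext i; simp only [Set.mem_Iio, Set.mem_union, Set.mem_singleton_iff]; omega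
        rw [this, Set.image_union, hup k le_rfl, Submodule.span_union]; simp
      have hle : Submodule.span F (Function.update v k w '' Set.Iio (k + 1)) ≤ W := by
        rw [hnew]; exact sup_le hW1 (by rwa [Submodule.span_singleton_le_iff_mem])
      have hfr : Module.finrank F (Submodule.span F (Function.update v k w '' Set.Iio (k + 1)))
          = k + 1 := by
        rw [hnew]
        have hw0 : w ≠ 0 := fun h0 => hw (h0 ▸ Submodule.zero_mem _)
        have h2 := Submodule.finrank_sup_add_finrank_inf_eq (Submodule.span F (v '' Set.Iio k))
          (Submodule.span F {w})
        rw [finrank_span_singleton hw0] at h2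
        have : Submodule.span F (v '' Set.Iio k) ⊓ (Submodule.span F {w}) = ⊥ := by
          rw [← disjoint_iff, Submodule.disjoint_span_singleton' hw0]; exact hw
        rw [this, finrank_bot] at h2
        omega
      refine ⟨Function.update v k w, hfr, ?_, ?_⟩
      · intro t ht htk
        rcases Nat.lt_or_ge t (k + 1) with h | h
        · rw [hup t (by omega)]; exact h2 t ht (by omega)
        · obtain rfl : t = k + 1 := by omega
          apply Submodule.eq_of_le_of_finrank_eq (hle.trans (hW3 _ ht le_rfl))
          rw [hfr, hx _ ht]
      · intro t ht htk
        exact hle.trans (hW3 t ht htk)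
  obtain ⟨v, h1, h2, -⟩ := key d le_rfl
  have him : ∀ t ≤ d, (fun i : Fin d => v i.val) '' {i | i.val < t} = v '' Set.Iio t := by
    intro t ht
    ext y
    constructor
    · rintro ⟨i, hi, rfl⟩; exact ⟨i.val, hi, rfl⟩
    · rintro ⟨i, hi, rfl⟩; exact ⟨⟨i, lt_of_lt_of_le hi ht⟩, hi, rfl⟩
  have hli : LinearIndependent F (fun i : Fin d => v i.val) := by
    apply linearIndependent_of_top_le_span_of_card_eq_finrank
    · have h3 : Submodule.span F (v '' Set.Iio d) = ⊤ :=
        Submodule.eq_top_of_finrank_eq (by rw [h1]; simp)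
      rw [← h3, ← him d le_rfl]
      exact Submodule.span_mono (Set.image_subset_range _ _)
    · simp
  refine ⟨⟨_, hli⟩, fun t ht => ?_⟩
  rw [← h2 t ht (hB t ht), ← him t (hB t ht)]
  rfl

/-- Functions of an ordered basis that depend only on the flag coordinates in `B`. -/
noncomputable def KK (F : Type) [Field F] [Fintype F] (d : ℕ) (B : Finset ℕ) :
    Submodule ℝ (EuclideanSpace ℝ (OBase F d)) where
  carrier := {f | ∀ v w : OBase F d, (∀ t ∈ B, fspan t v = fspan t w) → f v = f w}
  add_mem' := by
    intro f g hf hg v w h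
    simp [hf v w h, hg v w h]
  zero_mem' := by intro v w _; rfl
  smul_mem' := by
    intro c f hf v w h
    simp [hf v w h]

theorem mem_KK {F : Type} [Field F] [Fintype F] {d : ℕ} {B : Finset ℕ}
    {f : EuclideanSpace ℝ (OBase F d)} :
    f ∈ KK F d B ↔ ∀ v w : OBase F d, (∀ t ∈ B, fspan t v = fspan t w) → f v = f w := Iff.rfl

theorem KK_mono (F : Type) [Field F] [Fintype F] (d : ℕ) : Monotone (KK F d) := by
  intro B C h f hf v w hvw
  exact hf v w fun t ht => hvw t (h ht)

/-- The class of `v` for the coordinates in `B`. -/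
noncomputable def cls {F : Type} [Field F] [Fintype F] {d : ℕ} (B : Finset ℕ) (v : OBase F d) :
    Finset (OBase F d) :=
  univ.filter fun u : OBase F d => ∀ t ∈ B, fspan t u = fspan t v

theorem mem_cls {F : Type} [Field F] [Fintype F] {d : ℕ} {B : Finset ℕ} {u v : OBase F d} :
    u ∈ cls B v ↔ ∀ t ∈ B, fspan t u = fspan t v := by simp [cls]

theorem cls_card {F : Type} [Field F] [Fintype F] {d : ℕ} (B : Finset ℕ) (v w : OBase F d) :
    (cls B v).card = (cls B w).card := fiber_card B v w

theorem inner_eq {ι : Type*} [Fintype ι] (f g : EuclideanSpace ℝ ι) :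
    inner ℝ f g = ∑ v, f v * g v := by
  rw [PiLp.inner_apply]
  exact sum_congr rfl fun v _ => by simp [mul_comm]

theorem sum_cls_eq_zero {F : Type} [Field F] [Fintype F] {d : ℕ} {B : Finset ℕ}
    {f : EuclideanSpace ℝ (OBase F d)} (hf : f ∈ (KK F d B)ᗮ) (v : OBase F d) :
    ∑ u ∈ cls B v, f u = 0 := by
  let g : EuclideanSpace ℝ (OBase F d) := WithLp.toLp 2 fun u => if u ∈ cls B v then 1 else 0
  have hg : g ∈ KK F d B := by
    intro u w h
    have : u ∈ cls B v ↔ w ∈ cls B v := by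
      rw [mem_cls, mem_cls]
      exact forall₂_congr fun t ht => by rw [h t ht]
    simp [g, this]
  have := Submodule.inner_left_of_mem_orthogonal hg hf
  rw [inner_eq] at this
  rw [← this]
  simp [g]

theorem sum_sum_cls {F : Type} [Field F] [Fintype F] {d : ℕ} (B : Finset ℕ) (v₀ : OBase F d)
    (h : OBase F d → ℝ) :
    ∑ v, ∑ u ∈ cls B v, h u = (cls B v₀).card * ∑ u, h u := by
  have : ∀ v, ∑ u ∈ cls B v, h u = ∑ u, if u ∈ cls B v then h u else 0 := by
    intro v; simp
  simp_rw [this]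
  rw [sum_comm, mul_sum]
  refine sum_congr rfl fun u _ => ?_
  rw [cls_card B v₀ u, ← nsmul_eq_mul, ← sum_const, ← sum_filter]
  refine sum_congr ?_ fun _ _ => rfl
  ext v
  simp only [mem_filter, mem_univ, true_and, mem_cls]
  exact forall₂_congr fun t _ => eq_comm

/-- Conditional independence of the parts below and above a fixed coordinate. -/
theorem cond_indep {F : Type} [Field F] [Fintype F] {d : ℕ} {B : Finset ℕ} {a b s : ℕ}
    (hs : s ∈ B) (has : a ≤ s) (hsb : s ≤ b)
    {f g : EuclideanSpace ℝ (OBase F d)} (hf : f ∈ KK F d (B ∪ {a})) (hf' : f ∈ (KK F d B)ᗮ)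
    (hg : g ∈ KK F d (B ∪ {b})) : inner ℝ f g = (0 : ℝ) := by
  rw [inner_eq]
  rcases isEmpty_or_nonempty (OBase F d) with hE | ⟨⟨v₀⟩⟩
  · simp
  have h1 : ∑ w, ∑ v ∈ cls B w, f v * g w = 0 := by
    refine sum_eq_zero fun w _ => ?_
    rw [← sum_mul, sum_cls_eq_zero hf', zero_mul]
  have h2 : ∑ w, ∑ v ∈ cls B w, f v * g w = ∑ w, ∑ v ∈ cls B w, f v * g v := by
    rw [sum_sigma', sum_sigma']
    refine sum_nbij' (fun p => ⟨glue s p.1 p.2, glue s p.2 p.1⟩)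
      (fun p => ⟨glue s p.1 p.2, glue s p.2 p.1⟩) ?_ ?_ ?_ ?_ ?_
    · rintro ⟨w, v⟩ hp
      simp only [mem_sigma, mem_univ, true_and, mem_cls] at hp ⊢
      intro t ht
      rcases le_total t s with h | h
      · rw [glue_le s v w (hp s hs) t h, glue_le s w v (hp s hs).symm t h, hp t ht]
      · rw [glue_ge s v w (hp s hs) t h, glue_ge s w v (hp s hs).symm t h, hp t ht]
    · rintro ⟨w, v⟩ hp
      simp only [mem_sigma, mem_univ, true_and, mem_cls] at hp ⊢
      intro t ht
      rcases le_total t s with h | h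
      · rw [glue_le s v w (hp s hs) t h, glue_le s w v (hp s hs).symm t h, hp t ht]
      · rw [glue_ge s v w (hp s hs) t h, glue_ge s w v (hp s hs).symm t h, hp t ht]
    · rintro ⟨w, v⟩ hp
      simp only [mem_sigma, mem_univ, true_and, mem_cls] at hp
      simp only [glue_glue s v w (hp s hs), glue_glue s w v (hp s hs).symm]
    · rintro ⟨w, v⟩ hp
      simp only [mem_sigma, mem_univ, true_and, mem_cls] at hp
      simp only [glue_glue s v w (hp s hs), glue_glue s w v (hp s hs).symm]
    · rintro ⟨w, v⟩ hp
      simp only [mem_sigma, mem_univ, true_and, mem_cls] at hp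
      simp only
      have e1 : f (glue s v w) = f v := by
        apply hf
        intro t ht
        rw [mem_union, mem_singleton] at ht
        rcases le_total t s with h | h
        · rw [glue_le s v w (hp s hs) t h]
        · rw [glue_ge s v w (hp s hs) t h]
          rcases ht with ht | rfl
          · rw [hp t ht]
          · obtain rfl : t = s := le_antisymm has h
            rw [hp t hs]
      have e2 : g (glue s v w) = g w := by
        apply hg
        intro t ht
        rw [mem_union, mem_singleton] at ht
        rcases le_total s t with h | h
        · rw [glue_ge s v w (hp s hs) t h]
        · rw [glue_le s v w (hp s hs) t h]
          rcases ht with ht | rfl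
          · rw [hp t ht]
          · obtain rfl : t = s := le_antisymm h hsb
            rw [hp t hs]
      rw [e1, e2]
  have h3 := sum_sum_cls B v₀ (fun v => f v * g v)
  rw [← h2, h1] at h3
  have hpos : ((cls B v₀).card : ℝ) ≠ 0 := by
    have : 0 < (cls B v₀).card := card_pos.2 ⟨v₀, mem_cls.2 fun _ _ => rfl⟩
    positivity
  rcases mul_eq_zero.1 h3.symm with h | h
  · exact absurd h hpos
  · exact h

/-- Sums over a class of functions of two adjacent coordinates. -/
theorem cls_sum {F : Type} [Field F] [Fintype F] {d : ℕ} (B : Finset ℕ) (a l u : ℕ)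
    (haB : a ∉ B) (haB' : a + 1 ∉ B) (hla : l < a) (hau : a + 1 < u) (hud : u ≤ d)
    (hlB : l = 0 ∨ l ∈ B) (huB : u = d ∨ u ∈ B)
    (hlu : ∀ t ∈ B, t ≤ l ∨ u ≤ t) (v₀ : OBase F d)
    (h : Submodule F (Fin d → F) → Submodule F (Fin d → F) → ℝ) :
    ∑ v ∈ cls B v₀, h (fspan a v) (fspan (a + 1) v)
      = ((cls (B ∪ {a, a + 1}) v₀).card : ℝ) *
        ∑ A ∈ Gr (fspan l v₀) (fspan u v₀) a,
          ∑ A' ∈ (Gr (fspan l v₀) (fspan u v₀) (a + 1)).filter (fun A' => A ≤ A'), h A A' := by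
  have hL : ∀ v ∈ cls B v₀, fspan l v = fspan l v₀ := by
    intro v hv
    rcases hlB with rfl | hl
    · rw [fspan_zero, fspan_zero]
    · exact mem_cls.1 hv l hl
  have hU : ∀ v ∈ cls B v₀, fspan u v = fspan u v₀ := by
    intro v hv
    rcases huB with rfl | hl
    · rw [fspan_top v _ le_rfl, fspan_top v₀ _ le_rfl]
    · exact mem_cls.1 hv u hl
  rw [sum_sigma', mul_sum]
  rw [← sum_fiberwise_of_maps_to (s := cls B v₀)
    (g := fun v => (⟨fspan a v, fspan (a + 1) v⟩ :
      (_ : Submodule F (Fin d → F)) × Submodule F (Fin d → F)))]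
  · refine sum_congr rfl ?_
    rintro ⟨A, A'⟩ hp
    simp only [mem_sigma, mem_filter, Gr, mem_univ, true_and] at hp
    obtain ⟨⟨hA1, hA2, hA3⟩, ⟨hB1, hB2, hB3⟩, hAA⟩ := hp
    rw [sum_congr rfl (g := fun _ => h A A')]
    · rw [sum_const, nsmul_eq_mul]
      congr 2
      obtain ⟨v₁, hv₁⟩ := realize (B.filter (· ≤ d) ∪ {a, a + 1})
        (fun t => if t = a then A else if t = a + 1 then A' else fspan t v₀) (by
          intro t ht
          simp only [mem_union, mem_filter, mem_insert, mem_singleton] at ht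
          rcases ht with ht | rfl | rfl
          · exact ht.2
          · omega
          · omega) (by
          intro t ht
          simp only [mem_union, mem_filter, mem_insert, mem_singleton] at ht
          by_cases h1 : t = a
          · rw [if_pos h1, hA3, h1]
          · by_cases h2 : t = a + 1
            · rw [if_neg h1, if_pos h2, hB3, h2]
            · rw [if_neg h1, if_neg h2, finrank_fspan]
              omega) (by
          intro s hs t ht hst
          simp only [mem_union, mem_filter, mem_insert, mem_singleton] at hs ht
          have hs' : s = a ∨ s = a + 1 ∨ (s ∈ B ∧ s ≠ a ∧ s ≠ a + 1) := by
            rcases hs with hs | hs | hs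
            · exact Or.inr (Or.inr ⟨hs.1, fun h => haB (h ▸ hs.1), fun h => haB' (h ▸ hs.1)⟩)
            · exact Or.inl hs
            · exact Or.inr (Or.inl hs)
          have ht' : t = a ∨ t = a + 1 ∨ (t ∈ B ∧ t ≠ a ∧ t ≠ a + 1) := by
            rcases ht with hs | hs | hs
            · exact Or.inr (Or.inr ⟨hs.1, fun h => haB (h ▸ hs.1), fun h => haB' (h ▸ hs.1)⟩)
            · exact Or.inl hs
            · exact Or.inr (Or.inl hs)
          rcases hs' with rfl | rfl | ⟨hs1, hs2, hs3⟩
          · rcases ht' with rfl | rfl | ⟨ht1, ht2, ht3⟩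
            · simp
            · simpa using hAA
            · simp only [if_true, ht2, ht3, if_false]
              exact hA2.trans (fspan_mono (by have := hlu t ht1; omega) _)
          · rcases ht' with rfl | rfl | ⟨ht1, ht2, ht3⟩
            · omega
            · simp
            · simp only [if_true, ht2, ht3, if_false]
              simp only [Nat.succ_ne_self, if_false]
              exact hB2.trans (fspan_mono (by have := hlu t ht1; omega) _)
          · simp only [hs2, hs3, if_false]
            have := hlu s hs1
            rcases ht' with rfl | rfl | ⟨ht1, ht2, ht3⟩
            · simp only [if_true]
              exact (fspan_mono (by omega) _).trans hA1
            · simp only [if_true, Nat.succ_ne_self, if_false]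
              exact (fspan_mono (by omega) _).trans hB1
            · simp only [ht2, ht3, if_false]
              exact fspan_mono hst _)
      have hva : fspan a v₁ = A := by
        have := hv₁ a (by simp)
        simpa using this
      have hva' : fspan (a + 1) v₁ = A' := by
        have := hv₁ (a + 1) (by simp)
        simpa using this
      have hvB : ∀ t ∈ B, fspan t v₁ = fspan t v₀ := by
        intro t ht
        by_cases htd : t ≤ d
        · have := hv₁ t (by simp [ht, htd])
          have h1 : t ≠ a := fun h => haB (h ▸ ht)
          have h2 : t ≠ a + 1 := fun h => haB' (h ▸ ht)
          simpa [h1, h2] using this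
        · rw [fspan_top v₁ t (by omega), fspan_top v₀ t (by omega)]
      rw [cls_card (B ∪ {a, a + 1}) v₀ v₁]
      congr 1
      ext w
      simp only [mem_filter, mem_cls, Sigma.mk.injEq, heq_eq_eq, mem_union, mem_insert,
        mem_singleton]
      constructor
      · rintro ⟨h1, h2, h3⟩ t (ht | rfl | rfl)
        · rw [h1 t ht, hvB t ht]
        · rw [h2, hva]
        · rw [h3, hva']
      · intro h1
        refine ⟨fun t ht => ?_, ?_, ?_⟩
        · rw [h1 t (Or.inl ht), hvB t ht]
        · rw [h1 a (by simp), hva]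
        · rw [h1 (a + 1) (by simp), hva']
    · intro v hv
      simp only [mem_filter, Sigma.mk.injEq, heq_eq_eq] at hv
      rw [hv.2.1, hv.2.2]
  · intro v hv
    simp only [mem_sigma, mem_filter, Gr, mem_univ, true_and]
    rw [← hL v hv, ← hU v hv]
    exact ⟨⟨fspan_mono (by omega) v, fspan_mono (by omega) v, finrank_fspan v a (by omega)⟩,
      ⟨fspan_mono (by omega) v, fspan_mono (by omega) v, finrank_fspan v _ (by omega)⟩,
      fspan_mono (by omega) v⟩

theorem cls_bound {F : Type} [Field F] [Fintype F] {d : ℕ} (B : Finset ℕ) (a : ℕ)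
    (haB : a ∉ B) (haB' : a + 1 ∉ B) (ha : 1 ≤ a) (had : a + 1 < d) (v₀ : OBase F d)
    {f g : EuclideanSpace ℝ (OBase F d)} (hf : f ∈ KK F d (B ∪ {a})) (hf' : f ∈ (KK F d B)ᗮ)
    (hg : g ∈ KK F d (B ∪ {a + 1})) :
    (∑ v ∈ cls B v₀, f v * g v) ^ 2 ≤ 1 / (Fintype.card F : ℝ) *
      ((∑ v ∈ cls B v₀, f v ^ 2) * ∑ v ∈ cls B v₀, g v ^ 2) := by
  have hne1 : ((insert 0 B).filter (· < a)).Nonempty := ⟨0, by simp; omega⟩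
  have hne2 : ((insert d B).filter (a + 1 < ·)).Nonempty := ⟨d, by simp; omega⟩
  obtain ⟨l, hl⟩ : ∃ l, l = ((insert 0 B).filter (· < a)).max' hne1 := ⟨_, rfl⟩
  obtain ⟨u, hu⟩ : ∃ u, u = ((insert d B).filter (a + 1 < ·)).min' hne2 := ⟨_, rfl⟩
  have hlm := Finset.max'_mem _ hne1
  have hum := Finset.min'_mem _ hne2
  rw [← hl] at hlm
  rw [← hu] at hum
  simp only [mem_filter, mem_insert] at hlm hum
  have hud : u ≤ d := by
    rw [hu]; exact Finset.min'_le _ _ (by simp; omega)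
  have hlu : ∀ t ∈ B, t ≤ l ∨ u ≤ t := by
    intro t ht
    rcases lt_trichotomy t a with h | h | h
    · left; rw [hl]; exact Finset.le_max' _ _ (by simp [ht, h])
    · exact absurd (h ▸ ht) haB
    · rcases Nat.lt_or_ge (a + 1) t with h' | h'
      · right; rw [hu]; exact Finset.min'_le _ _ (by simp [ht, h'])
      · obtain rfl : t = a + 1 := by omega
        exact absurd ht haB'
  have hsum := cls_sum B a l u haB haB' hlm.2 hum.2 hud hlm.1 hum.1 hlu v₀
  obtain ⟨φ, hφ⟩ : ∃ φ : Submodule F (Fin d → F) → ℝ, ∀ v ∈ cls B v₀, f v = φ (fspan a v) := by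
    refine ⟨fun A => if h : ∃ v ∈ cls B v₀, fspan a v = A then f h.choose else 0, ?_⟩
    intro v hv
    have h : ∃ w ∈ cls B v₀, fspan a w = fspan a v := ⟨v, hv, rfl⟩
    dsimp only
    rw [dif_pos h]
    apply hf
    intro t ht
    rw [mem_union, mem_singleton] at ht
    rcases ht with ht | rfl
    · rw [mem_cls.1 hv t ht, mem_cls.1 h.choose_spec.1 t ht]
    · exact h.choose_spec.2.symm
  obtain ⟨γ, hγ⟩ : ∃ γ : Submodule F (Fin d → F) → ℝ,
      ∀ v ∈ cls B v₀, g v = γ (fspan (a + 1) v) := by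
    refine ⟨fun A => if h : ∃ v ∈ cls B v₀, fspan (a + 1) v = A then g h.choose else 0, ?_⟩
    intro v hv
    have h : ∃ w ∈ cls B v₀, fspan (a + 1) w = fspan (a + 1) v := ⟨v, hv, rfl⟩
    dsimp only
    rw [dif_pos h]
    apply hg
    intro t ht
    rw [mem_union, mem_singleton] at ht
    rcases ht with ht | rfl
    · rw [mem_cls.1 hv t ht, mem_cls.1 h.choose_spec.1 t ht]
    · exact h.choose_spec.2.symm
  have hfl : Module.finrank F (fspan l v₀) = l := finrank_fspan v₀ l (by omega)
  have hfu : Module.finrank F (fspan u v₀) = u := finrank_fspan v₀ u (by omega)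
  have hN : 0 < ((cls (B ∪ {a, a + 1}) v₀).card : ℝ) := by
    have : 0 < (cls (B ∪ {a, a + 1}) v₀).card := card_pos.2 ⟨v₀, mem_cls.2 fun _ _ => rfl⟩
    exact_mod_cast this
  have hz : ∑ A ∈ Gr (fspan l v₀) (fspan u v₀) a, φ A = 0 := by
    have h0 := sum_cls_eq_zero hf' v₀
    rw [sum_congr rfl hφ, hsum (fun A _ => φ A)] at h0
    rw [sum_congr rfl (g := fun A => qn F (u - a) * φ A)] at h0
    · rw [← mul_sum] at h0
      have hq : 0 < qn F (u - a) := by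
        have h1 := one_lt_q F
        unfold qn
        apply div_pos _ (by linarith)
        have := one_lt_pow₀ h1 (n := u - a) (by omega)
        linarith
      rcases mul_eq_zero.1 h0 with h | h
      · exact absurd h hN.ne'
      · rcases mul_eq_zero.1 h with h | h
        · exact absurd h hq.ne'
        · exact h
    · intro A hA
      rw [sum_const, nsmul_eq_mul, Gr_up _ _ _ A hA, hfu]
  have hb := Gr_bilin (fspan l v₀) (fspan u v₀) a (by omega) (by omega) φ γ hz
  rw [sum_congr rfl (fun v hv => show f v * g v = _ by rw [hφ v hv, hγ v hv]),
    sum_congr rfl (fun v hv => show f v ^ 2 = _ by rw [hφ v hv]),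
    sum_congr rfl (fun v hv => show g v ^ 2 = _ by rw [hγ v hv]),
    hsum (fun A A' => φ A * γ A'), hsum (fun A _ => φ A ^ 2), hsum (fun _ A' => γ A' ^ 2)]
  have := mul_le_mul_of_nonneg_left hb (sq_nonneg ((cls (B ∪ {a, a + 1}) v₀).card : ℝ))
  calc _ = _ := by rw [mul_pow]
    _ ≤ _ := this
    _ = _ := by ring

theorem cor_adj {F : Type} [Field F] [Fintype F] {d : ℕ} (a : ℕ) (ha : 1 ≤ a) (had : a + 1 < d) :
    CorBd (KK F d) {a} {a + 1} (1 / Real.sqrt (Fintype.card F)) := by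
  intro B f hf hf' g hg hg'
  by_cases haB : a ∈ B
  · have : f ∈ KK F d B := by rwa [union_eq_left.2 (by simpa using haB)] at hf
    rw [Submodule.inner_right_of_mem_orthogonal this hg']
    positivity
  by_cases haB' : a + 1 ∈ B
  · have : g ∈ KK F d B := by rwa [union_eq_left.2 (by simpa using haB')] at hg
    rw [Submodule.inner_left_of_mem_orthogonal this hf']
    positivity
  rcases isEmpty_or_nonempty (OBase F d) with hE | ⟨⟨v₀⟩⟩
  · rw [inner_eq, Finset.univ_eq_empty, sum_empty]; positivity
  set n : ℝ := ((cls B v₀).card : ℝ) with hn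
  have hpos : 0 < n := by
    have : 0 < (cls B v₀).card := card_pos.2 ⟨v₀, mem_cls.2 fun _ _ => rfl⟩
    rw [hn]; exact_mod_cast this
  have hfn : ∑ v, f v ^ 2 = ‖f‖ ^ 2 := (EuclideanSpace.real_norm_sq_eq f).symm
  have hgn : ∑ v, g v ^ 2 = ‖g‖ ^ 2 := (EuclideanSpace.real_norm_sq_eq g).symm
  have s1 := sum_sum_cls B v₀ (fun v => f v * g v)
  have s2 := sum_sum_cls B v₀ (fun v => f v ^ 2)
  have s3 := sum_sum_cls B v₀ (fun v => g v ^ 2)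
  rw [← hn] at s1 s2 s3
  rw [hfn] at s2
  rw [hgn] at s3
  have step : ∀ w : OBase F d, ∑ v ∈ cls B w, f v * g v ≤ 1 / Real.sqrt (Fintype.card F) *
      (Real.sqrt (∑ v ∈ cls B w, f v ^ 2) * Real.sqrt (∑ v ∈ cls B w, g v ^ 2)) := by
    intro w
    have := cls_bound B a haB haB' ha had w hf hf' hg
    have h2 := Real.le_sqrt_of_sq_le this
    rwa [Real.sqrt_mul (by positivity),
      Real.sqrt_mul (sum_nonneg fun _ _ => sq_nonneg _), Real.sqrt_div (by norm_num),
      Real.sqrt_one] at h2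
  have cs := Real.sum_sqrt_mul_sqrt_le (univ : Finset (OBase F d))
    (f := fun w => ∑ v ∈ cls B w, f v ^ 2) (g := fun w => ∑ v ∈ cls B w, g v ^ 2)
    (fun w => sum_nonneg fun _ _ => sq_nonneg _) (fun w => sum_nonneg fun _ _ => sq_nonneg _)
  rw [s2, s3, Real.sqrt_mul hpos.le, Real.sqrt_mul hpos.le, Real.sqrt_sq (norm_nonneg _),
    Real.sqrt_sq (norm_nonneg _)] at cs
  have tot : n * inner ℝ f g ≤ n * (1 / Real.sqrt (Fintype.card F) * (‖f‖ * ‖g‖)) := by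
    rw [inner_eq, ← s1]
    calc _ ≤ ∑ w, 1 / Real.sqrt (Fintype.card F) *
          (Real.sqrt (∑ v ∈ cls B w, f v ^ 2) * Real.sqrt (∑ v ∈ cls B w, g v ^ 2)) :=
          sum_le_sum fun w _ => step w
      _ = 1 / Real.sqrt (Fintype.card F) * ∑ w,
          (Real.sqrt (∑ v ∈ cls B w, f v ^ 2) * Real.sqrt (∑ v ∈ cls B w, g v ^ 2)) := by
          rw [mul_sum]
      _ ≤ 1 / Real.sqrt (Fintype.card F) * (Real.sqrt n * ‖f‖ * (Real.sqrt n * ‖g‖)) := by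
          gcongr
      _ = (Real.sqrt n * Real.sqrt n) * (1 / Real.sqrt (Fintype.card F) * (‖f‖ * ‖g‖)) := by ring
      _ = _ := by rw [Real.mul_self_sqrt hpos.le]
  exact le_of_mul_le_mul_left tot hpos

theorem cor_lt {F : Type} [Field F] [Fintype F] {d : ℕ} (a b : ℕ) (ha : 1 ≤ a) (hab : a < b)
    (hb : b < d) : CorBd (KK F d) {a} {b} (1 / Real.sqrt (Fintype.card F)) := by
  rcases Nat.eq_or_lt_of_le (Nat.succ_le_of_lt hab) with h | hlt
  · rw [← h]; exact cor_adj a ha (by omega)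
  have hlt : a + 1 < b := hlt
  intro B f hf hf' g hg hg'
  set B' := B ∪ {a + 1} with hB'
  set f' := (KK F d B').starProjection f with hf'def
  have hBB : KK F d B ≤ KK F d B' := KK_mono F d subset_union_left
  have m1 : f' ∈ KK F d B' := Submodule.starProjection_apply_mem _ _
  have m2 : f - f' ∈ (KK F d B')ᗮ := Submodule.sub_starProjection_mem_orthogonal f
  have m3 : f' ∈ (KK F d B)ᗮ := by
    have : f' = f - (f - f') := by abel
    rw [this]
    exact Submodule.sub_mem _ hf' (Submodule.orthogonal_le hBB m2)
  have m4 : f - f' ∈ KK F d (B' ∪ {a}) := by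
    refine Submodule.sub_mem _ (KK_mono F d ?_ hf) (KK_mono F d subset_union_left m1)
    intro x; simp [hB']; tauto
  have m5 : g ∈ KK F d (B' ∪ {b}) := by
    refine KK_mono F d ?_ hg
    intro x; simp [hB']; tauto
  have i1 : inner ℝ (f - f') g = (0 : ℝ) :=
    cond_indep (s := a + 1) (by simp [hB']) (by omega) hlt.le m4 m2 m5
  have i2 : inner ℝ (f - f') f' = (0 : ℝ) := Submodule.inner_left_of_mem_orthogonal m1 m2
  rw [inner_sub_left, sub_eq_zero] at i1 i2
  have n1 := cor_adj (F := F) a ha (by omega : a + 1 < d) B f hf hf' f' m1 m3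
  rw [i2, real_inner_self_eq_norm_sq] at n1
  have n2 : ‖f'‖ ≤ 1 / Real.sqrt (Fintype.card F) * ‖f‖ := by
    rcases (norm_nonneg f').eq_or_lt with h0 | h0
    · rw [← h0]; positivity
    · have : ‖f'‖ * ‖f'‖ ≤ (1 / Real.sqrt (Fintype.card F) * ‖f‖) * ‖f'‖ := by
        rw [← pow_two]; linarith
      exact le_of_mul_le_mul_right this h0
  rw [i1]
  calc _ ≤ ‖f'‖ * ‖g‖ := real_inner_le_norm _ _
    _ ≤ (1 / Real.sqrt (Fintype.card F) * ‖f‖) * ‖g‖ := by gcongr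
    _ = _ := by ring

theorem cor_blocks {F : Type} [Field F] [Fintype F] {d : ℕ} (c c' : Finset ℕ)
    (hc : c ⊆ Icc 1 (d - 1)) (hc' : c' ⊆ Icc 1 (d - 1)) (hd : Disjoint c c') :
    CorBd (KK F d) c c'
      (Real.sqrt c.card * (Real.sqrt c'.card * (1 / Real.sqrt (Fintype.card F)))) := by
  apply CorBd.both (KK_mono F d) (by positivity)
  intro a ha b hb
  have h1 := mem_Icc.1 (hc ha)
  have h2 := mem_Icc.1 (hc' hb)
  rcases lt_trichotomy a b with h | h | h
  · exact cor_lt a b h1.1 h (by omega)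
  · exact absurd hb (h ▸ disjoint_left.1 hd ha)
  · exact (cor_lt b a h2.1 h (by omega)).symm

/-- The `S`-flag of an ordered basis. -/
noncomputable def topOf {F : Type} [Field F] [Fintype F] {d : ℕ} (S : Finset ℕ) (v : OBase F d) :
    Finset (Submodule F (Fin d → F)) := S.image fun t => fspan t v

theorem mem_topOf {F : Type} [Field F] [Fintype F] {d : ℕ} {S : Finset ℕ}
    (hS : S ⊆ Icc 1 (d - 1)) {v : OBase F d} {W : Submodule F (Fin d → F)} :
    W ∈ topOf S v ↔ Module.finrank F W ∈ S ∧ W = fspan (Module.finrank F W) v := by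
  have hd : ∀ t ∈ S, Module.finrank F (fspan t v) = t := by
    intro t ht
    have := mem_Icc.1 (hS ht)
    exact finrank_fspan v t (by omega)
  rw [topOf, mem_image]
  constructor
  · rintro ⟨t, ht, rfl⟩
    rw [hd t ht]; exact ⟨ht, rfl⟩
  · rintro ⟨h1, h2⟩
    exact ⟨_, h1, h2.symm⟩

theorem topOf_max {F : Type} [Field F] [Fintype F] {d : ℕ} {S : Finset ℕ}
    (hS : S ⊆ Icc 1 (d - 1)) (v : OBase F d) : IsMaxFlagFace F d S (topOf S v) := by
  refine ⟨⟨?_, ?_⟩, ?_⟩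
  · intro W hW W' hW' _
    rw [mem_coe, mem_topOf hS] at hW hW'
    rw [hW.2, hW'.2]
    rcases le_total (Module.finrank F W) (Module.finrank F W') with h | h
    · exact Or.inl (fspan_mono h v)
    · exact Or.inr (fspan_mono h v)
  · intro W hW
    exact ((mem_topOf hS).1 hW).1
  · intro i hi
    have := mem_Icc.1 (hS hi)
    exact ⟨fspan i v, mem_image_of_mem _ hi, finrank_fspan v i (by omega)⟩

theorem chain_eq {F : Type} [Field F] [Fintype F] {d : ℕ} {T : Finset (Submodule F (Fin d → F))}
    (hT : IsChain (· ≤ ·) (T : Set (Submodule F (Fin d → F)))) {W W' : Submodule F (Fin d → F)}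
    (hW : W ∈ T) (hW' : W' ∈ T) (h : Module.finrank F W = Module.finrank F W') : W = W' := by
  rcases hT.total (mem_coe.2 hW) (mem_coe.2 hW') with h' | h'
  · exact Submodule.eq_of_le_of_finrank_eq h' h
  · exact (Submodule.eq_of_le_of_finrank_eq h' h.symm).symm

theorem exists_topOf {F : Type} [Field F] [Fintype F] {d : ℕ} {S : Finset ℕ}
    (hS : S ⊆ Icc 1 (d - 1)) {T : Finset (Submodule F (Fin d → F))}
    (hT : IsMaxFlagFace F d S T) : ∃ v : OBase F d, topOf S v = T := by
  obtain ⟨⟨hch, hdim⟩, hex⟩ := hT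
  choose! x hx1 hx2 using hex
  obtain ⟨v, hv⟩ := realize S x (fun t ht => by have := mem_Icc.1 (hS ht); omega) hx2 (by
    intro s hs t ht hst
    rcases hch.total (mem_coe.2 (hx1 s hs)) (mem_coe.2 (hx1 t ht)) with h | h
    · exact h
    · have h1 := Submodule.finrank_mono h
      rw [hx2 s hs, hx2 t ht] at h1
      obtain rfl : s = t := le_antisymm hst h1
      exact le_rfl)
  refine ⟨v, ?_⟩
  ext W
  rw [mem_topOf hS]
  constructor
  · rintro ⟨h1, h2⟩
    rw [h2, hv _ h1]; exact hx1 _ h1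
  · intro hW
    refine ⟨hdim W hW, ?_⟩
    rw [hv _ (hdim W hW)]
    exact chain_eq hch hW (hx1 _ (hdim W hW)) (hx2 _ (hdim W hW)).symm

theorem blockOf_topOf {F : Type} [Field F] [Fintype F] {d : ℕ} {S c : Finset ℕ}
    (hS : S ⊆ Icc 1 (d - 1)) (hc : c ⊆ S) (v : OBase F d) :
    blockOf F d (topOf S v) c = c.image fun t => fspan t v := by
  have : (c.image fun t => fspan t v) = topOf c v := rfl
  rw [this]
  ext W
  rw [blockOf, mem_filter, mem_topOf hS, mem_topOf (hc.trans hS)]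
  constructor
  · rintro ⟨⟨_, h1⟩, h2⟩; exact ⟨h2, h1⟩
  · rintro ⟨h2, h1⟩; exact ⟨⟨hc h2, h1⟩, h2⟩

theorem topOf_eq_iff {F : Type} [Field F] [Fintype F] {d : ℕ} {S : Finset ℕ}
    (hS : S ⊆ Icc 1 (d - 1)) (v w : OBase F d) : topOf S v = topOf S w ↔ v ∈ cls S w := by
  rw [mem_cls]
  constructor
  · intro h t ht
    have h1 : fspan t v ∈ topOf S w := h ▸ mem_image_of_mem _ ht
    have := mem_Icc.1 (hS ht)
    have h2 := ((mem_topOf hS).1 h1).2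
    rwa [finrank_fspan v t (by omega)] at h2
  · intro h
    exact image_congr fun t ht => h t ht

/-- The dimensions used by `σ`. -/
noncomputable def sdims {F : Type} [Field F] [Fintype F] {d : ℕ}
    (σ : Finset (Finset (Submodule F (Fin d → F)))) : Finset ℕ :=
  σ.biUnion fun s => s.image fun W : Submodule F (Fin d → F) => Module.finrank F W

theorem mem_tops_iff {F : Type} [Field F] [Fintype F] {d : ℕ} {S : Finset ℕ}
    (hS : S ⊆ Icc 1 (d - 1)) {σ : Finset (Finset (Submodule F (Fin d → F)))} {v₀ : OBase F d}
    (h₀ : topOf S v₀ ∈ topsAboveBlocks F d S σ) (v : OBase F d) :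
    topOf S v ∈ topsAboveBlocks F d S σ ↔ v ∈ cls (sdims σ) v₀ := by
  simp only [topsAboveBlocks, mem_filter, mem_univ, true_and] at h₀ ⊢
  rw [mem_cls]
  constructor
  · rintro ⟨-, h⟩ t ht
    simp only [sdims, mem_biUnion, mem_image] at ht
    obtain ⟨s, hs, W, hW, rfl⟩ := ht
    rw [← ((mem_topOf hS).1 (h s hs hW)).2, ← ((mem_topOf hS).1 (h₀.2 s hs hW)).2]
  · intro h
    refine ⟨topOf_max hS v, fun s hs W hW => ?_⟩
    have h1 := (mem_topOf hS).1 (h₀.2 s hs hW)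
    rw [mem_topOf hS]
    refine ⟨h1.1, ?_⟩
    rw [h (Module.finrank F W)]
    · exact h1.2
    · simp only [sdims, mem_biUnion, mem_image]
      exact ⟨s, hs, W, hW, rfl⟩

theorem sum_tops {F : Type} [Field F] [Fintype F] {d : ℕ} {S : Finset ℕ}
    (hS : S ⊆ Icc 1 (d - 1)) {σ : Finset (Finset (Submodule F (Fin d → F)))} {v₀ : OBase F d}
    (h₀ : topOf S v₀ ∈ topsAboveBlocks F d S σ)
    (h : Finset (Submodule F (Fin d → F)) → ℝ) :
    ∑ v ∈ cls (sdims σ) v₀, h (topOf S v)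
      = ((cls S v₀).card : ℝ) * ∑ T ∈ topsAboveBlocks F d S σ, h T := by
  rw [mul_sum, ← sum_fiberwise_of_maps_to (s := cls (sdims σ) v₀) (g := fun v => topOf S v)
    (t := topsAboveBlocks F d S σ) (fun v hv => (mem_tops_iff hS h₀ v).2 hv)]
  refine sum_congr rfl fun T hT => ?_
  obtain ⟨v₁, rfl⟩ := exists_topOf hS (T := T) (by
    simp only [topsAboveBlocks, mem_filter] at hT; exact hT.2.1)
  rw [sum_congr rfl (g := fun _ => h (topOf S v₁))]
  · rw [sum_const, nsmul_eq_mul, cls_card S v₀ v₁]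
    congr 3
    ext v
    rw [mem_filter, topOf_eq_iff hS]
    refine ⟨fun h => h.2, fun h => ⟨?_, h⟩⟩
    rw [← mem_tops_iff hS h₀, (topOf_eq_iff hS v v₁).2 h]
    exact hT
  · intro v hv
    rw [(mem_filter.1 hv).2]

theorem pair_bound {F : Type} [Field F] [Fintype F] {d : ℕ} {S : Finset ℕ}
    (hS : S ⊆ Icc 1 (d - 1)) {σ : Finset (Finset (Submodule F (Fin d → F)))}
    (r : ℕ) (c c' : Finset ℕ) (hc : c ⊆ S) (hc' : c' ⊆ S) (hcc : Disjoint c c')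
    (hcr : c.card = r + 1) (hcr' : c'.card = r + 1)
    (f : Finset (Submodule F (Fin d → F)) → ℝ) (μ μ' : ℝ)
    (hμ : ∑ T ∈ topsAboveBlocks F d S σ, (f (blockOf F d T c) - μ) = 0)
    (hμ' : ∑ T ∈ topsAboveBlocks F d S σ, (f (blockOf F d T c') - μ') = 0) :
    ∑ T ∈ topsAboveBlocks F d S σ, (f (blockOf F d T c) - μ) * (f (blockOf F d T c') - μ')
      ≤ (((r : ℝ) + 1) / Real.sqrt (Fintype.card F)) *
        ((∑ T ∈ topsAboveBlocks F d S σ, (f (blockOf F d T c) - μ) ^ 2 +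
          ∑ T ∈ topsAboveBlocks F d S σ, (f (blockOf F d T c') - μ') ^ 2) / 2) := by
  rcases (topsAboveBlocks F d S σ).eq_empty_or_nonempty with hE | ⟨T₀, hT₀⟩
  · simp [hE]
  obtain ⟨v₀, rfl⟩ := exists_topOf hS (T := T₀) (by
    simp only [topsAboveBlocks, mem_filter] at hT₀; exact hT₀.2.1)
  have hM : 0 < ((cls S v₀).card : ℝ) := by
    have : 0 < (cls S v₀).card := card_pos.2 ⟨v₀, mem_cls.2 fun _ _ => rfl⟩
    exact_mod_cast this
  let G : Finset ℕ → ℝ → EuclideanSpace ℝ (OBase F d) := fun c μ =>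
    WithLp.toLp 2 fun v => if v ∈ cls (sdims σ) v₀ then f (blockOf F d (topOf S v) c) - μ else 0
  have hG : ∀ c μ v, G c μ v
      = if v ∈ cls (sdims σ) v₀ then f (blockOf F d (topOf S v) c) - μ else 0 := fun _ _ _ => rfl
  have hcls : ∀ v w : OBase F d, (∀ t ∈ sdims σ, fspan t v = fspan t w) →
      (v ∈ cls (sdims σ) v₀ ↔ w ∈ cls (sdims σ) v₀) := by
    intro v w h
    rw [mem_cls, mem_cls]
    exact forall₂_congr fun t ht => by rw [h t ht]
  have hmem : ∀ c μ, c ⊆ S → G c μ ∈ KK F d (sdims σ ∪ c) := by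
    intro c μ hc v w h
    rw [hG, hG, blockOf_topOf hS hc, blockOf_topOf hS hc]
    have e : (c.image fun t => fspan t v) = c.image fun t => fspan t w :=
      image_congr fun t ht => h t (mem_union_right _ ht)
    simp only [hcls v w fun t ht => h t (mem_union_left _ ht), e]
  have horth : ∀ c μ, ∑ T ∈ topsAboveBlocks F d S σ, (f (blockOf F d T c) - μ) = 0 →
      G c μ ∈ (KK F d (sdims σ))ᗮ := by
    intro c μ h0
    rw [Submodule.mem_orthogonal]
    intro h hh
    rw [inner_eq]
    have : ∀ v, h v * G c μ v = if v ∈ cls (sdims σ) v₀ then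
        h v₀ * (f (blockOf F d (topOf S v) c) - μ) else 0 := by
      intro v
      rw [hG]
      split_ifs with hv
      · rw [hh v v₀ (mem_cls.1 hv)]
      · simp
    simp_rw [this]
    rw [← sum_filter, ← mul_sum]
    have h2 := sum_tops hS hT₀ (fun T => f (blockOf F d T c) - μ)
    rw [h0, mul_zero] at h2
    rw [filter_mem_eq_inter, univ_inter, h2, mul_zero]
  have key := cor_blocks (F := F) (d := d) c c' (hc.trans hS) (hc'.trans hS) hcc (sdims σ)
    (G c μ) (hmem c μ hc) (horth c μ hμ) (G c' μ') (hmem c' μ' hc') (horth c' μ' hμ')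
  have hsq : ∀ c μ, ‖G c μ‖ ^ 2 = ((cls S v₀).card : ℝ) *
      ∑ T ∈ topsAboveBlocks F d S σ, (f (blockOf F d T c) - μ) ^ 2 := by
    intro c μ
    rw [EuclideanSpace.real_norm_sq_eq, ← sum_tops hS hT₀ (fun T => (f (blockOf F d T c) - μ) ^ 2)]
    rw [← univ_inter (cls (sdims σ) v₀), ← filter_mem_eq_inter, sum_filter]
    refine sum_congr rfl fun v _ => ?_
    rw [hG]; split_ifs <;> simp
  have hin : inner ℝ (G c μ) (G c' μ') = ((cls S v₀).card : ℝ) *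
      ∑ T ∈ topsAboveBlocks F d S σ,
        (f (blockOf F d T c) - μ) * (f (blockOf F d T c') - μ') := by
    rw [inner_eq, ← sum_tops hS hT₀
      (fun T => (f (blockOf F d T c) - μ) * (f (blockOf F d T c') - μ'))]
    rw [← univ_inter (cls (sdims σ) v₀), ← filter_mem_eq_inter, sum_filter]
    refine sum_congr rfl fun v _ => ?_
    rw [hG, hG]; split_ifs <;> simp
  have hss : Real.sqrt ((r + 1 : ℕ) : ℝ) * Real.sqrt ((r + 1 : ℕ) : ℝ) = ((r + 1 : ℕ) : ℝ) :=
    Real.mul_self_sqrt (by positivity)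
  have hss2 : ∀ e : ℝ, Real.sqrt ((r + 1 : ℕ) : ℝ) * (Real.sqrt ((r + 1 : ℕ) : ℝ) * e)
      = ((r + 1 : ℕ) : ℝ) * e := fun e => by rw [← mul_assoc, hss]
  rw [hcr, hcr', hss2, hin] at key
  have amgm : ‖G c μ‖ * ‖G c' μ'‖ ≤ (‖G c μ‖ ^ 2 + ‖G c' μ'‖ ^ 2) / 2 := by
    nlinarith [sq_nonneg (‖G c μ‖ - ‖G c' μ'‖)]
  rw [hsq, hsq] at amgm
  apply le_of_mul_le_mul_left _ hM
  refine key.trans ?_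
  calc _ ≤ ((r + 1 : ℕ) : ℝ) * (1 / Real.sqrt (Fintype.card F)) * _ :=
        mul_le_mul_of_nonneg_left amgm (by positivity)
    _ = _ := by push_cast; ring

theorem final_arith {α ι : Type*} [DecidableEq ι] (X : Finset α) (R : Finset ι) (hR : 2 ≤ R.card)
    (φ : ι → α → ℝ) (ε : ℝ) (hε : 0 ≤ ε)
    (hmean : (∑ T ∈ X, (∑ c ∈ R, φ c T) / (R.card : ℝ)) / (X.card : ℝ) = 0)
    (hpair : ∀ c ∈ R, ∀ c' ∈ R, c ≠ c' → ∀ μ μ' : ℝ, ∑ T ∈ X, (φ c T - μ) = 0 →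
      ∑ T ∈ X, (φ c' T - μ') = 0 →
      ∑ T ∈ X, (φ c T - μ) * (φ c' T - μ') ≤
        ε * ((∑ T ∈ X, (φ c T - μ) ^ 2 + ∑ T ∈ X, (φ c' T - μ') ^ 2) / 2)) :
    (∑ T ∈ X, (∑ c ∈ R, ∑ c' ∈ R.erase c, φ c T * φ c' T) /
        ((R.card : ℝ) * ((R.card : ℝ) - 1))) / (X.card : ℝ)
      ≤ ε * ((∑ T ∈ X, (∑ c ∈ R, φ c T ^ 2) / (R.card : ℝ)) / (X.card : ℝ)) := by
  rcases X.eq_empty_or_nonempty with rfl | hX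
  · simp
  have hn : (0 : ℝ) < (X.card : ℝ) := by exact_mod_cast card_pos.2 hX
  have hk : (2 : ℝ) ≤ (R.card : ℝ) := by exact_mod_cast hR
  set n : ℝ := (X.card : ℝ) with hndef
  set k : ℝ := (R.card : ℝ) with hkdef
  set μ : ι → ℝ := fun c => (∑ T ∈ X, φ c T) / n with hμ
  have hμ1 : ∀ c, ∑ T ∈ X, φ c T = n * μ c := by
    intro c; exact (mul_div_cancel₀ _ hn.ne').symm
  have hμ0 : ∀ c, ∑ T ∈ X, (φ c T - μ c) = 0 := by
    intro c
    rw [sum_sub_distrib, sum_const, nsmul_eq_mul, hμ1]; ring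
  have hsum : ∑ c ∈ R, μ c = 0 := by
    rw [← sum_div, sum_comm] at hmean
    have h1 : ∑ c ∈ R, ∑ T ∈ X, φ c T = 0 := by
      rcases div_eq_zero_iff.1 hmean with h | h
      · rcases div_eq_zero_iff.1 h with h | h
        · exact h
        · linarith
      · exact absurd h hn.ne'
    rw [sum_congr rfl fun c _ => hμ1 c, ← mul_sum] at h1
    rcases mul_eq_zero.1 h1 with h | h
    · exact absurd h hn.ne'
    · exact h
  set s : ι → ℝ := fun c => ∑ T ∈ X, φ c T ^ 2 with hs
  have hvar : ∀ c, ∑ T ∈ X, (φ c T - μ c) ^ 2 ≤ s c := by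
    intro c
    have : ∑ T ∈ X, (φ c T - μ c) ^ 2 = s c - n * μ c ^ 2 := by
      have : ∀ T, (φ c T - μ c) ^ 2 = φ c T ^ 2 - 2 * μ c * φ c T + μ c ^ 2 := fun T => by ring
      rw [sum_congr rfl fun T _ => this T]
      rw [sum_add_distrib, sum_sub_distrib, ← mul_sum, hμ1, sum_const, nsmul_eq_mul]
      ring
    rw [this]
    have : 0 ≤ n * μ c ^ 2 := mul_nonneg hn.le (sq_nonneg _)
    linarith
  have hpr : ∀ c ∈ R, ∀ c' ∈ R.erase c, ∑ T ∈ X, φ c T * φ c' T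
      ≤ n * (μ c * μ c') + ε * ((s c + s c') / 2) := by
    intro c hc c' hc'
    have h1 := hpair c hc c' (mem_of_mem_erase hc') (ne_of_mem_erase hc').symm _ _ (hμ0 c) (hμ0 c')
    have h2 : ∑ T ∈ X, (φ c T - μ c) * (φ c' T - μ c')
        = ∑ T ∈ X, φ c T * φ c' T - n * (μ c * μ c') := by
      have : ∀ T, (φ c T - μ c) * (φ c' T - μ c')
          = φ c T * φ c' T - μ c' * φ c T - μ c * φ c' T + μ c * μ c' := fun T => by ring
      rw [sum_congr rfl fun T _ => this T]
      rw [sum_add_distrib, sum_sub_distrib, sum_sub_distrib, ← mul_sum, ← mul_sum, hμ1, hμ1,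
        sum_const, nsmul_eq_mul]
      ring
    rw [h2] at h1
    have h3 : ε * ((∑ T ∈ X, (φ c T - μ c) ^ 2 + ∑ T ∈ X, (φ c' T - μ c') ^ 2) / 2)
        ≤ ε * ((s c + s c') / 2) := by
      have a1 := hvar c
      have a2 := hvar c'
      gcongr
    linarith
  have hcard : ∀ c ∈ R, ((R.erase c).card : ℝ) = k - 1 := by
    intro c hc
    rw [card_erase_of_mem hc, Nat.cast_sub (by omega)]; simp [hkdef]
  have e1 : ∑ c ∈ R, ∑ c' ∈ R.erase c, (n * (μ c * μ c')) = - n * ∑ c ∈ R, μ c ^ 2 := by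
    rw [mul_sum]
    refine sum_congr rfl fun c hc => ?_
    rw [← mul_sum, ← mul_sum]
    have := add_sum_erase R μ hc
    rw [hsum] at this
    rw [show ∑ c' ∈ R.erase c, μ c' = - μ c by linarith]; ring
  have e2 : ∑ c ∈ R, ∑ c' ∈ R.erase c, ε * ((s c + s c') / 2) = ε * ((k - 1) * ∑ c ∈ R, s c) := by
    have a1 : ∀ c ∈ R, ∑ c' ∈ R.erase c, ε * ((s c + s c') / 2)
        = ε / 2 * ((k - 1) * s c + (∑ c' ∈ R, s c' - s c)) := by
      intro c hc
      have := add_sum_erase R s hc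
      rw [← mul_sum, ← sum_div, sum_add_distrib, sum_const, nsmul_eq_mul, hcard c hc, ← this]
      ring
    rw [sum_congr rfl a1, ← mul_sum, sum_add_distrib, sum_sub_distrib, ← mul_sum, sum_const,
      nsmul_eq_mul]
    ring
  have tot : ∑ T ∈ X, ∑ c ∈ R, ∑ c' ∈ R.erase c, φ c T * φ c' T
      ≤ ε * ((k - 1) * ∑ c ∈ R, s c) := by
    rw [sum_comm]
    calc _ = ∑ c ∈ R, ∑ c' ∈ R.erase c, ∑ T ∈ X, φ c T * φ c' T :=
          sum_congr rfl fun c _ => sum_comm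
      _ ≤ ∑ c ∈ R, ∑ c' ∈ R.erase c, (n * (μ c * μ c') + ε * ((s c + s c') / 2)) :=
          sum_le_sum fun c hc => sum_le_sum fun c' hc' => hpr c hc c' hc'
      _ = - n * ∑ c ∈ R, μ c ^ 2 + ε * ((k - 1) * ∑ c ∈ R, s c) := by
          rw [← e1, ← e2, ← sum_add_distrib]
          exact sum_congr rfl fun c _ => sum_add_distrib
      _ ≤ _ := by
          have : 0 ≤ n * ∑ c ∈ R, μ c ^ 2 := mul_nonneg hn.le (sum_nonneg fun _ _ => sq_nonneg _)
          linarith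
  rw [← sum_div, ← sum_div, sum_comm (s := X) (t := R) (f := fun T c => φ c T ^ 2)]
  change _ ≤ ε * ((∑ c ∈ R, s c) / k / n)
  rw [← mul_div_assoc]
  apply div_le_div_of_nonneg_right _ hn.le
  rw [div_le_iff₀ (by nlinarith)]
  refine tot.trans (le_of_eq ?_)
  field_simp

/-- The colored faces complex `F^J(B(d,S,q))` is a one-sided local
spectral expander with parameter `λ′ = 2(r+1)/(√q - 1 - 2(|S|-r))`, stated in
Rayleigh-quotient form for the link of each face `σ` with `|σ| ≤ m - 2`. -/
theorem stmt_15 (q : ℕ) (hq : IsPrimePow q)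
    (F : Type) [Field F] [Fintype F] (hF : Fintype.card F = q)
    (d : ℕ) (hd : 3 ≤ d)
    (S : Finset ℕ) (hS : S ⊆ Finset.Icc 1 (d - 1)) (hScard : 2 ≤ S.card)
    (r : ℕ) (hr : 2 * r + 2 ≤ S.card)
    (hq' : 0 < Real.sqrt (q : ℝ) - 1 - 2 * ((S.card : ℝ) - (r : ℝ)))
    (J : Finset (Finset ℕ)) (m : ℕ) (hm : J.card = m) (hm2 : 2 ≤ m)
    (hJsize : ∀ c ∈ J, c.card = r + 1)
    (hJS : ∀ c ∈ J, c ⊆ S)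
    (hJdisj : ∀ c ∈ J, ∀ c' ∈ J, c ≠ c' → Disjoint c c')
    (σ : Finset (Finset (Submodule F (Fin d → F))))
    (hσface : ∀ s ∈ σ, IsChain (· ≤ ·) (s : Set (Submodule F (Fin d → F))))
    (hσJ : ∀ s ∈ σ, s.image (fun W : Submodule F (Fin d → F) => Module.finrank F W) ∈ J)
    (hσinj : ∀ s ∈ σ, ∀ s' ∈ σ,
      s ≠ s' → s.image (fun W : Submodule F (Fin d → F) => Module.finrank F W) ≠
        s'.image (fun W : Submodule F (Fin d → F) => Module.finrank F W))
    (hσunion : IsFlagFace F d S (σ.biUnion id))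
    (hσcard : σ.card + 2 ≤ m)
    (f : Finset (Submodule F (Fin d → F)) → ℝ)
    (hmean : facesVertExp F d S J σ f = 0) :
    facesPairExp F d S J σ f f ≤
      (2 * ((r : ℝ) + 1) / (Real.sqrt (q : ℝ) - 1 - 2 * ((S.card : ℝ) - (r : ℝ)))) *
        facesVertExp F d S J σ (fun b => (f b) ^ 2) := by
  subst hF
  have hRcard : 2 ≤ (remColors F d J σ).card := by
    have h1 := Finset.le_card_sdiff
      (σ.image (fun s => s.image (fun W : Submodule F (Fin d → F) => Module.finrank F W))) J
    have h2 : (σ.image (fun s => s.image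
      (fun W : Submodule F (Fin d → F) => Module.finrank F W))).card ≤ σ.card := card_image_le
    unfold remColors
    omega
  have hRJ : ∀ c ∈ remColors F d J σ, c ∈ J := fun c hc => (mem_sdiff.1 hc).1
  have hε : 0 ≤ ((r : ℝ) + 1) / Real.sqrt (Fintype.card F) := by positivity
  have main := final_arith (topsAboveBlocks F d S σ) (remColors F d J σ) hRcard
    (fun c T => f (blockOf F d T c)) (((r : ℝ) + 1) / Real.sqrt (Fintype.card F)) hε hmean
    (fun c hc c' hc' hne μ μ' h1 h2 => pair_bound hS r c c' (hJS c (hRJ c hc))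
      (hJS c' (hRJ c' hc')) (hJdisj c (hRJ c hc) c' (hRJ c' hc') hne) (hJsize c (hRJ c hc))
      (hJsize c' (hRJ c' hc')) f μ μ' h1 h2)
  have hnn : 0 ≤ facesVertExp F d S J σ (fun b => (f b) ^ 2) := by
    unfold facesVertExp
    refine div_nonneg (sum_nonneg fun T _ => div_nonneg (sum_nonneg fun c _ => sq_nonneg _) ?_) ?_
    · positivity
    · positivity
  have hrS : (r : ℝ) ≤ S.card := by
    have : r ≤ S.card := by omega
    exact_mod_cast this
  have hle : ((r : ℝ) + 1) / Real.sqrt (Fintype.card F) ≤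
      2 * ((r : ℝ) + 1) / (Real.sqrt ((Fintype.card F : ℕ) : ℝ) - 1 - 2 * ((S.card : ℝ) - (r : ℝ))) := by
    have hr0 : (0 : ℝ) ≤ r := by positivity
    apply div_le_div₀ (by positivity) (by linarith) hq' (by linarith)
  exact main.trans (mul_le_mul_of_nonneg_right hle hnn)
end
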